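/- arXiv:2409.13134 — 8 statements merged into one kernel-verified Lean document; each statement's English description precedes it below -/
import Mathlib

section
/- Let M be a structure in a language ℒ, let α be an infinite ordinal, and let ā, b̄ be finite tuples from M of the same length with (M, ā) ≡_α (M, b̄). Suppose a ∈ M is the unique element of M realizing its quantifier-free type over ā. Then there is a unique b ∈ M with qftp^M(b, b̄) = qftp^M(a, ā), and for this b we have (M, āa) ≡_α (M, b̄b). -/
open FirstOrder

universe u v w

namespace ScottTools

variable (L : FirstOrder.Language.{u, v}) (M : Type w) (N : Type w) [L.Structure M] [L.Structure N]

/-- Two tuples (of the same length) have the same quantifier-free type. -/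
def QFEquiv {n : ℕ} (a : Fin n → M) (b : Fin n → N) : Prop :=
  ∀ φ : L.Formula (Fin n), φ.IsQF → (φ.Realize a ↔ φ.Realize b)

/-- The ordinal-indexed back-and-forth equivalence `(M, ā) ≡_α (N, b̄)`:
`≡₀` is equality of quantifier-free types, `≡_{α+1}` is the back-and-forth condition
with respect to `≡_α`, and limit stages are intersections. -/
def BFEquiv : Ordinal.{w} → (n : ℕ) → (Fin n → M) → (Fin n → N) → Prop
  | α, n, a, b =>
    QFEquiv L M N a b ∧
    ∀ β : Ordinal.{w}, β < α →
      (∀ x : M, ∃ y : N, BFEquiv β (n + 1) (Fin.snoc a x) (Fin.snoc b y)) ∧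
      (∀ y : N, ∃ x : M, BFEquiv β (n + 1) (Fin.snoc a x) (Fin.snoc b y))
  termination_by α => α

/-- `(M, ā) ≡_∞ (N, b̄)`: back-and-forth equivalent for all ordinals. -/
def BFEquivInf (n : ℕ) (a : Fin n → M) (b : Fin n → N) : Prop :=
  ∀ α : Ordinal.{w}, BFEquiv L M N α n a b

/-- The Scott rank of a structure: the least ordinal `α` such that any two finite tuples
that are `≡_α`-equivalent are `≡_∞`-equivalent. -/
noncomputable def ScottRank : Ordinal.{w} :=
  sInf {α : Ordinal.{w} | ∀ (n : ℕ) (a b : Fin n → M),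
    BFEquiv L M M α n a b → BFEquivInf L M M n a b}

/-- `B` is a base for `M`: distinct elements of `M` have distinct complete first-order
types over `B`. -/
def IsBase (B : Set M) : Prop :=
  ∀ a b : M,
    (∀ (k : ℕ) (p : Fin k → M), (∀ i, p i ∈ B) →
      ∀ φ : L.Formula (Fin (k + 1)),
        (φ.Realize (Fin.snoc p a) ↔ φ.Realize (Fin.snoc p b))) →
    a = b

end ScottTools

open ScottTools

theorem ScottTools.QFEquiv.comp_aux {L : FirstOrder.Language.{u, v}} {M : Type w} [L.Structure M]
    {m n : ℕ} {a b : Fin n → M} (h : QFEquiv L M M a b) (σ : Fin m → Fin n) :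
    QFEquiv L M M (a ∘ σ) (b ∘ σ) := by
  intro φ hφ
  have := h (FirstOrder.Language.Formula.relabel σ φ) (hφ.relabel _)
  rwa [FirstOrder.Language.Formula.realize_relabel,
    FirstOrder.Language.Formula.realize_relabel] at this

theorem ScottTools.QFEquiv.symm_aux {L : FirstOrder.Language.{u, v}} {M : Type w} [L.Structure M]
    {n : ℕ} {a b : Fin n → M} (h : QFEquiv L M M a b) : QFEquiv L M M b a :=
  fun φ hφ => (h φ hφ).symm

theorem ScottTools.QFEquiv.trans_aux {L : FirstOrder.Language.{u, v}} {M : Type w} [L.Structure M]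
    {n : ℕ} {a b c : Fin n → M} (h : QFEquiv L M M a b) (h' : QFEquiv L M M b c) :
    QFEquiv L M M a c :=
  fun φ hφ => (h φ hφ).trans (h' φ hφ)

theorem ScottTools.QFEquiv.eq_aux {L : FirstOrder.Language.{u, v}} {M : Type w} [L.Structure M]
    {n : ℕ} {a b : Fin n → M} (h : QFEquiv L M M a b) (i j : Fin n) (e : a i = a j) :
    b i = b j := by
  have := h (FirstOrder.Language.Term.equal (FirstOrder.Language.var i)
    (FirstOrder.Language.var j))
    (FirstOrder.Language.BoundedFormula.IsAtomic.equal _ _).isQF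
  simpa [FirstOrder.Language.Formula.realize_equal, e] using this

theorem snoc_comp_aux {M : Type w} {m n : ℕ} (a : Fin n → M) (x : M) (σ : Fin m → Fin n) :
    (Fin.snoc (a ∘ σ) x : Fin (m + 1) → M) =
      (Fin.snoc a x : Fin (n + 1) → M) ∘
        (Fin.snoc (fun i => (σ i).castSucc) (Fin.last n) : Fin (m + 1) → Fin (n + 1)) := by
  funext i
  refine Fin.lastCases ?_ (fun i => ?_) i <;> simp

theorem ScottTools.BFEquiv.comp_aux {L : FirstOrder.Language.{u, v}} {M : Type w} [L.Structure M]
    (α : Ordinal.{w}) : ∀ {m n : ℕ} {a b : Fin n → M} (_ : BFEquiv L M M α n a b)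
    (σ : Fin m → Fin n), BFEquiv L M M α m (a ∘ σ) (b ∘ σ) := by
  induction α using WellFoundedLT.induction with
  | ind α ih =>
    intro m n a b h σ
    rw [BFEquiv] at h ⊢
    refine ⟨h.1.comp_aux σ, fun β hβ => ⟨fun x => ?_, fun y => ?_⟩⟩
    · obtain ⟨y, hy⟩ := (h.2 β hβ).1 x
      refine ⟨y, ?_⟩
      rw [snoc_comp_aux, snoc_comp_aux]
      exact ih β hβ hy _
    · obtain ⟨x, hx⟩ := (h.2 β hβ).2 y
      refine ⟨x, ?_⟩
      rw [snoc_comp_aux, snoc_comp_aux]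
      exact ih β hβ hx _

theorem ScottTools.BFEquiv.qf_aux {L : FirstOrder.Language.{u, v}} {M : Type w} [L.Structure M]
    {α : Ordinal.{w}} {n : ℕ} {a b : Fin n → M} (h : BFEquiv L M M α n a b) :
    QFEquiv L M M a b := by
  rw [BFEquiv] at h
  exact h.1

/-- Swap the last two coordinates. -/
theorem swap_aux {M : Type w} (n : ℕ) : ∃ σ : Fin (n + 2) → Fin (n + 2),
    ∀ (a : Fin n → M) (x y : M),
      (Fin.snoc (Fin.snoc a x : Fin (n + 1) → M) y : Fin (n + 2) → M) ∘ σ =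
      (Fin.snoc (Fin.snoc a y : Fin (n + 1) → M) x : Fin (n + 2) → M) := by
  refine ⟨(Fin.snoc (Fin.snoc (fun i : Fin n => i.castSucc.castSucc) (Fin.last (n + 1)) :
    Fin (n + 1) → Fin (n + 2)) (Fin.last n).castSucc : Fin (n + 2) → Fin (n + 2)), ?_⟩
  intro a x y
  funext i
  refine Fin.lastCases ?_ (fun i => ?_) i
  · simp
  · refine Fin.lastCases ?_ (fun i => ?_) i <;> simp

/-- Drop the next-to-last coordinate. -/
theorem drop_aux {M : Type w} (n : ℕ) : ∃ σ : Fin (n + 1) → Fin (n + 2),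
    ∀ (a : Fin n → M) (x y : M),
      (Fin.snoc (Fin.snoc a x : Fin (n + 1) → M) y : Fin (n + 2) → M) ∘ σ =
      (Fin.snoc a y : Fin (n + 1) → M) := by
  refine ⟨(Fin.snoc (fun i : Fin n => i.castSucc.castSucc) (Fin.last (n + 1)) :
    Fin (n + 1) → Fin (n + 2)), ?_⟩
  intro a x y
  funext i
  refine Fin.lastCases ?_ (fun i => ?_) i <;> simp

theorem ScottTools.QFEquiv.drop_aux {L : FirstOrder.Language.{u, v}} {M : Type w} [L.Structure M]
    {n : ℕ} {a b : Fin n → M} {x y x' y' : M}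
    (h : QFEquiv L M M (Fin.snoc (Fin.snoc a x : Fin (n + 1) → M) y : Fin (n + 2) → M)
      (Fin.snoc (Fin.snoc b x' : Fin (n + 1) → M) y' : Fin (n + 2) → M)) :
    QFEquiv L M M (Fin.snoc a y : Fin (n + 1) → M) (Fin.snoc b y' : Fin (n + 1) → M) := by
  obtain ⟨σ, hσ⟩ := _root_.drop_aux (M := M) n
  have := h.comp_aux σ
  rwa [hσ, hσ] at this

theorem ScottTools.BFEquiv.swap_aux {L : FirstOrder.Language.{u, v}} {M : Type w} [L.Structure M]
    {α : Ordinal.{w}} {n : ℕ} {a b : Fin n → M} {x y x' y' : M}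
    (h : BFEquiv L M M α (n + 2)
      (Fin.snoc (Fin.snoc a x : Fin (n + 1) → M) y : Fin (n + 2) → M)
      (Fin.snoc (Fin.snoc b x' : Fin (n + 1) → M) y' : Fin (n + 2) → M)) :
    BFEquiv L M M α (n + 2)
      (Fin.snoc (Fin.snoc a y : Fin (n + 1) → M) x : Fin (n + 2) → M)
      (Fin.snoc (Fin.snoc b y' : Fin (n + 1) → M) x' : Fin (n + 2) → M) := by
  obtain ⟨σ, hσ⟩ := _root_.swap_aux (M := M) n
  have := BFEquiv.comp_aux _ h σ
  rwa [hσ, hσ] at this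

theorem uniq_aux {L : FirstOrder.Language.{u, v}} {M : Type w} [L.Structure M]
    {n : ℕ} (α : Ordinal.{w}) (hα : Ordinal.omega0 ≤ α) (a b : Fin n → M)
    (h : BFEquiv L M M α n a b) (x : M)
    (hx : ∀ x' : M, QFEquiv L M M (Fin.snoc a x') (Fin.snoc a x) → x' = x) :
    (∃! y : M, QFEquiv L M M (Fin.snoc b y) (Fin.snoc a x)) := by
  rw [BFEquiv] at h
  have h1 : (1 : Ordinal.{w}) < α := Ordinal.one_lt_omega0.trans_le hα
  obtain ⟨y, hy⟩ := (h.2 1 h1).1 x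
  refine ⟨y, hy.qf_aux.symm_aux, fun y' hy' => ?_⟩
  rw [BFEquiv] at hy
  obtain ⟨x2, hx2⟩ := (hy.2 0 zero_lt_one).2 y'
  have e : x2 = x := hx x2 (hx2.qf_aux.drop_aux.trans_aux hy')
  subst e
  have := hx2.qf_aux.eq_aux (Fin.last _) (Fin.last n).castSucc (by simp)
  simpa using this

theorem main_aux {L : FirstOrder.Language.{u, v}} {M : Type w} [L.Structure M]
    (α : Ordinal.{w}) : ∀ (_ : Ordinal.omega0 ≤ α) {n : ℕ} (a b : Fin n → M)
    (_ : BFEquiv L M M α n a b) (x : M)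
    (_ : ∀ x' : M, QFEquiv L M M (Fin.snoc a x') (Fin.snoc a x) → x' = x),
    ∀ y : M, QFEquiv L M M (Fin.snoc b y) (Fin.snoc a x) →
      BFEquiv L M M α (n + 1) (Fin.snoc a x) (Fin.snoc b y) := by
  induction α using WellFoundedLT.induction with
  | ind α ih =>
    intro hα n a b h x hx y hy
    have hu : ∀ {y₁ y₂ : M}, QFEquiv L M M (Fin.snoc b y₁) (Fin.snoc a x) →
        QFEquiv L M M (Fin.snoc b y₂) (Fin.snoc a x) → y₁ = y₂ :=
      fun p q => (uniq_aux α hα a b h x hx).unique p q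
    rw [BFEquiv] at h ⊢
    refine ⟨hy.symm_aux, fun β hβ => ?_⟩
    rcases lt_or_ge β Ordinal.omega0 with hω | hω
    · have hβ' : Order.succ β < α := (Ordinal.isSuccLimit_omega0.succ_lt hω).trans_le hα
      obtain ⟨y', hy'⟩ := (h.2 _ hβ').1 x
      obtain rfl := hu hy hy'.qf_aux.symm_aux
      rw [BFEquiv] at hy'
      exact hy'.2 β (Order.lt_succ β)
    · have key : ∀ c d : M, BFEquiv L M M β (n + 1) (Fin.snoc a c) (Fin.snoc b d) →
          BFEquiv L M M β (n + 1 + 1) (Fin.snoc (Fin.snoc a x : Fin (n + 1) → M) c)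
            (Fin.snoc (Fin.snoc b y : Fin (n + 1) → M) d) := by
        intro c d hcd
        have hx' : ∀ x' : M, QFEquiv L M M
            (Fin.snoc (Fin.snoc a c : Fin (n + 1) → M) x' : Fin (n + 2) → M)
            (Fin.snoc (Fin.snoc a c : Fin (n + 1) → M) x : Fin (n + 2) → M) → x' = x :=
          fun x' hq => hx x' hq.drop_aux
        obtain ⟨y', hy', -⟩ := uniq_aux β hω _ _ hcd x hx'
        obtain rfl := hu hy (QFEquiv.drop_aux hy')
        exact (ih β hβ hω _ _ hcd x hx' y hy').swap_aux
      refine ⟨fun c => ?_, fun d => ?_⟩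
      · obtain ⟨d, hd⟩ := (h.2 β hβ).1 c
        exact ⟨d, key c d hd⟩
      · obtain ⟨c, hc⟩ := (h.2 β hβ).2 d
        exact ⟨c, key c d hc⟩

/-- If `α` is an infinite ordinal, `(M, ā) ≡_α (M, b̄)`, and `a` is the unique realization of
its quantifier-free type over `ā`, then there is a unique `b` with
`qftp(b̄, b) = qftp(ā, a)`, and for this `b` we have `(M, āa) ≡_α (M, b̄b)`. -/
theorem unique_qf_extension {L : FirstOrder.Language.{u, v}} {M : Type w} [L.Structure M]
    {n : ℕ} (α : Ordinal.{w}) (hα : Ordinal.omega0 ≤ α) (a b : Fin n → M)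
    (h : BFEquiv L M M α n a b) (x : M)
    (hx : ∀ x' : M, QFEquiv L M M (Fin.snoc a x') (Fin.snoc a x) → x' = x) :
    (∃! y : M, QFEquiv L M M (Fin.snoc b y) (Fin.snoc a x)) ∧
    ∀ y : M, QFEquiv L M M (Fin.snoc b y) (Fin.snoc a x) →
      BFEquiv L M M α (n + 1) (Fin.snoc a x) (Fin.snoc b y) := by
  exact ⟨uniq_aux α hα a b h x hx, main_aux α hα a b h x hx⟩
end

section
/- Let M be a structure and c̄ ∈ Mⁿ, and let N be the expansion of M obtained by adding c̄ as a sequence of n new constants. Then sr(N) ≤ sr(M) ≤ sr(N) + ω + n. -/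
open FirstOrder

universe u v w

open ScottTools FirstOrder Language

/-- The expansion `M(c̄)` of `M` by (finitely many) constants. -/
def withConsts (L : FirstOrder.Language.{u, v}) (M : Type w) [L.Structure M] {m : ℕ}
    (c : Fin m → M) : (L[[Fin m]]).Structure M :=
  letI : (constantsOn (Fin m)).Structure M := constantsOn.structure c
  inferInstance

namespace ScottTools

section Basic

variable {L : FirstOrder.Language.{u, v}} {M : Type w} [L.Structure M]

theorem bf_qf {α : Ordinal.{w}} {k : ℕ} {a b : Fin k → M}
    (h : BFEquiv L M M α k a b) : QFEquiv L M M a b := by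
  rw [BFEquiv] at h
  exact h.1

theorem bf_forth {α β : Ordinal.{w}} {k : ℕ} {a b : Fin k → M}
    (h : BFEquiv L M M α k a b) (hβ : β < α) (x : M) :
    ∃ y : M, BFEquiv L M M β (k + 1) (Fin.snoc a x) (Fin.snoc b y) := by
  rw [BFEquiv] at h
  exact (h.2 β hβ).1 x

theorem bf_back {α β : Ordinal.{w}} {k : ℕ} {a b : Fin k → M}
    (h : BFEquiv L M M α k a b) (hβ : β < α) (y : M) :
    ∃ x : M, BFEquiv L M M β (k + 1) (Fin.snoc a x) (Fin.snoc b y) := by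
  rw [BFEquiv] at h
  exact (h.2 β hβ).2 y

theorem bf_intro {α : Ordinal.{w}} {k : ℕ} {a b : Fin k → M}
    (h0 : QFEquiv L M M a b)
    (h1 : ∀ β < α, ∀ x : M, ∃ y : M, BFEquiv L M M β (k + 1) (Fin.snoc a x) (Fin.snoc b y))
    (h2 : ∀ β < α, ∀ y : M, ∃ x : M, BFEquiv L M M β (k + 1) (Fin.snoc a x) (Fin.snoc b y)) :
    BFEquiv L M M α k a b := by
  rw [BFEquiv]
  exact ⟨h0, fun β hβ => ⟨h1 β hβ, h2 β hβ⟩⟩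

theorem bf_mono {α β : Ordinal.{w}} (hβ : β ≤ α) {k : ℕ} {a b : Fin k → M}
    (h : BFEquiv L M M α k a b) : BFEquiv L M M β k a b :=
  bf_intro (bf_qf h) (fun _ hγ => bf_forth h (hγ.trans_le hβ))
    (fun _ hγ => bf_back h (hγ.trans_le hβ))

theorem bf_symm (α : Ordinal.{w}) : ∀ {k : ℕ} {a b : Fin k → M},
    BFEquiv L M M α k a b → BFEquiv L M M α k b a := by
  induction α using WellFoundedLT.induction with
  | ind α ih =>
    intro k a b h
    refine bf_intro (fun φ hφ => (bf_qf h φ hφ).symm) (fun β hβ x => ?_) (fun β hβ x => ?_)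
    · obtain ⟨y, hy⟩ := bf_back h hβ x
      exact ⟨y, ih β hβ hy⟩
    · obtain ⟨y, hy⟩ := bf_forth h hβ x
      exact ⟨y, ih β hβ hy⟩

theorem bf_trans (α : Ordinal.{w}) : ∀ {k : ℕ} {a b c : Fin k → M},
    BFEquiv L M M α k a b → BFEquiv L M M α k b c → BFEquiv L M M α k a c := by
  induction α using WellFoundedLT.induction with
  | ind α ih =>
    intro k a b c h h'
    refine bf_intro (fun φ hφ => (bf_qf h φ hφ).trans (bf_qf h' φ hφ))
      (fun β hβ x => ?_) (fun β hβ x => ?_)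
    · obtain ⟨y, hy⟩ := bf_forth h hβ x
      obtain ⟨z, hz⟩ := bf_forth h' hβ y
      exact ⟨z, ih β hβ hy hz⟩
    · obtain ⟨y, hy⟩ := bf_back h' hβ x
      obtain ⟨z, hz⟩ := bf_back h hβ y
      exact ⟨z, ih β hβ hz hy⟩

theorem qf_comp {k m : ℕ} {a b : Fin k → M} (f : Fin m → Fin k)
    (h : QFEquiv L M M a b) : QFEquiv L M M (a ∘ f) (b ∘ f) := by
  intro φ hφ
  have := h (φ.relabel f) (FirstOrder.Language.BoundedFormula.IsQF.relabel hφ _)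
  simpa [FirstOrder.Language.Formula.realize_relabel] using this

theorem snoc_comp_snoc {k m : ℕ} (a : Fin k → M) (f : Fin m → Fin k) (x : M) :
    (Fin.snoc (a ∘ f) x : Fin (m + 1) → M) =
      (Fin.snoc a x : Fin (k + 1) → M) ∘
        (Fin.snoc (fun i => (f i).castSucc) (Fin.last k) : Fin (m + 1) → Fin (k + 1)) := by
  funext i
  refine Fin.lastCases ?_ (fun i => ?_) i <;> simp

theorem bf_comp (α : Ordinal.{w}) : ∀ {k m : ℕ} {a b : Fin k → M} (f : Fin m → Fin k),
    BFEquiv L M M α k a b → BFEquiv L M M α m (a ∘ f) (b ∘ f) := by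
  induction α using WellFoundedLT.induction with
  | ind α ih =>
    intro k m a b f h
    refine bf_intro (qf_comp f (bf_qf h)) (fun β hβ x => ?_) (fun β hβ x => ?_)
    · obtain ⟨y, hy⟩ := bf_forth h hβ x
      refine ⟨y, ?_⟩
      rw [snoc_comp_snoc, snoc_comp_snoc]
      exact ih β hβ _ hy
    · obtain ⟨y, hy⟩ := bf_back h hβ x
      refine ⟨y, ?_⟩
      rw [snoc_comp_snoc, snoc_comp_snoc]
      exact ih β hβ _ hy

theorem bf_play {m : ℕ} : ∀ (γ : Ordinal.{w}) {k : ℕ} {a b : Fin k → M} (c : Fin m → M),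
    BFEquiv L M M (γ + m) k a b →
    ∃ d : Fin m → M, BFEquiv L M M γ (k + m) (Fin.append a c) (Fin.append b d) := by
  induction m with
  | zero =>
    intro γ k a b c h
    refine ⟨c, ?_⟩
    have h' : BFEquiv L M M γ k a b := by simpa using h
    rw [Fin.append_right_nil _ _ rfl, Fin.append_right_nil _ _ rfl]
    exact bf_comp γ _ h'
  | succ m ih =>
    intro γ k a b c h
    have e : γ + ((m + 1 : ℕ) : Ordinal.{w}) = (γ + 1) + m := by
      rw [Nat.add_comm, Nat.cast_add, Nat.cast_one, add_assoc]
    rw [e] at h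
    obtain ⟨d, hd⟩ := ih (γ + 1) (Fin.init c) h
    obtain ⟨y, hy⟩ := bf_forth hd (lt_add_one γ) (c (Fin.last m))
    refine ⟨Fin.snoc d y, ?_⟩
    have hc : c = Fin.snoc (Fin.init c) (c (Fin.last m)) := (Fin.snoc_init_self c).symm
    rw [hc, Fin.append_snoc, Fin.append_snoc]
    exact hy

variable (L M) in
theorem scottRank_spec : ∀ (n : ℕ) (a b : Fin n → M),
    BFEquiv L M M (ScottRank L M) n a b → BFEquivInf L M M n a b := by
  classical
  refine csInf_mem (s := {α : Ordinal.{w} | ∀ (n : ℕ) (a b : Fin n → M),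
    BFEquiv L M M α n a b → BFEquivInf L M M n a b}) ?_
  let F : (Σ n : ℕ, (Fin n → M) × (Fin n → M)) → Ordinal.{w} := fun p =>
    if h : ∃ α : Ordinal.{w}, ¬ BFEquiv L M M α p.1 p.2.1 p.2.2 then h.choose else 0
  refine ⟨⨆ p, F p, ?_⟩
  intro n a b h
  by_contra hc
  have hex : ∃ α : Ordinal.{w}, ¬ BFEquiv L M M α n a b := by
    simpa [BFEquivInf] using hc
  have hF : F ⟨n, a, b⟩ = hex.choose := dif_pos hex
  have hle : F ⟨n, a, b⟩ ≤ ⨆ p, F p := Ordinal.le_iSup F _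
  rw [hF] at hle
  exact hex.choose_spec (bf_mono hle h)

theorem scottRank_le {α : Ordinal.{w}} (h : ∀ (n : ℕ) (a b : Fin n → M),
    BFEquiv L M M α n a b → BFEquivInf L M M n a b) : ScottRank L M ≤ α :=
  csInf_le' h

theorem append_comp_castAdd {n k : ℕ} (c : Fin n → M) (x : Fin k → M) :
    Fin.append c x ∘ Fin.castAdd k = c := by
  funext i; simp

theorem append_comp_natAdd {n k : ℕ} (c : Fin n → M) (x : Fin k → M) :
    Fin.append c x ∘ Fin.natAdd n = x := by
  funext i; simp

theorem append_swap {n k : ℕ} (c : Fin n → M) (x : Fin k → M) :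
    Fin.append c x = Fin.append x c ∘ Fin.append (Fin.natAdd k) (Fin.castAdd n) := by
  funext i
  refine Fin.addCases (fun i => ?_) (fun i => ?_) i <;> simp

/-- The core back-and-forth argument: if `≡_β` over `c` is `≡_∞` over `c`, and
`c ≡_{β+ω} d`, then `(c, x) ≡_β (d, y)` implies `(c, x) ≡_∞ (d, y)`. -/
theorem bf_core {n : ℕ} {c d : Fin n → M} {β : Ordinal.{w}}
    (hβ : ∀ (k : ℕ) (x y : Fin k → M),
      BFEquiv L M M β (n + k) (Fin.append c x) (Fin.append c y) →
      BFEquivInf L M M (n + k) (Fin.append c x) (Fin.append c y))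
    (hcd : BFEquiv L M M (β + Ordinal.omega0) n c d) (α : Ordinal.{w}) :
    ∀ (k : ℕ) (x y : Fin k → M),
      BFEquiv L M M β (n + k) (Fin.append c x) (Fin.append d y) →
      BFEquiv L M M α (n + k) (Fin.append c x) (Fin.append d y) := by
  induction α using WellFoundedLT.induction with
  | ind α ih =>
    intro k x y h
    have h1 : BFEquiv L M M (β + 1) (n + k) (Fin.append c x) (Fin.append d y) := by
      have hle : (β + 1) + (k : Ordinal.{w}) ≤ β + Ordinal.omega0 := by
        rw [add_assoc]
        have : (1 : Ordinal.{w}) + k = ((1 + k : ℕ) : Ordinal.{w}) := by push_cast; rfl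
        rw [this]
        gcongr
        exact (Ordinal.natCast_lt_omega0 _).le
      obtain ⟨x', hx'⟩ := bf_play (β + 1) y (bf_symm _ (bf_mono hle hcd))
      have h2 := hβ k x x' (bf_trans β h (bf_mono (lt_add_one β).le hx'))
      exact bf_trans _ (h2 (β + 1)) (bf_symm _ hx')
    refine bf_intro (bf_qf h) (fun γ hγ z => ?_) (fun γ hγ z => ?_)
    · obtain ⟨t, ht⟩ := bf_forth h1 (lt_add_one β) z
      refine ⟨t, ?_⟩
      rw [← Fin.append_snoc, ← Fin.append_snoc] at ht ⊢
      exact ih γ hγ (k + 1) _ _ ht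
    · obtain ⟨t, ht⟩ := bf_back h1 (lt_add_one β) z
      refine ⟨t, ?_⟩
      rw [← Fin.append_snoc, ← Fin.append_snoc] at ht ⊢
      exact ih γ hγ (k + 1) _ _ ht

end Basic

section Transfer

open FirstOrder.Language

theorem isQF_mapTermRel {L : FirstOrder.Language} {L' : FirstOrder.Language} {α β : Type*}
    {k : ℕ} (ft : ∀ n, L.Term (α ⊕ Fin n) → L'.Term (β ⊕ Fin n))
    (fr : ∀ n, L.Relations n → L'.Relations n)
    (h : ∀ n, L'.BoundedFormula β (n + 1) → L'.BoundedFormula β (n + 1))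
    {φ : L.BoundedFormula α k} (hφ : φ.IsQF) :
    (φ.mapTermRel ft fr h).IsQF := by
  induction hφ with
  | falsum => exact BoundedFormula.IsQF.falsum
  | of_isAtomic ha =>
    cases ha with
    | equal t₁ t₂ => exact (BoundedFormula.IsAtomic.equal _ _).isQF
    | rel R ts => exact (BoundedFormula.IsAtomic.rel _ _).isQF
  | imp _ _ h1 h2 => exact h1.imp h2

variable {L : FirstOrder.Language.{u, v}} {M : Type w} [L.Structure M] {n : ℕ}
  [L[[Fin n]].Structure M] [(L.lhomWithConstants (Fin n)).IsExpansionOn M]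

theorem qf_transfer {c : Fin n → M} (hc : ∀ i, ((L.con i : L[[Fin n]].Constants) : M) = c i)
    {k : ℕ} (a b : Fin k → M) :
    QFEquiv L[[Fin n]] M M a b ↔ QFEquiv L M M (Fin.append c a) (Fin.append c b) := by
  have hc' : (fun i => ((L.con i : L[[Fin n]].Constants) : M)) = c := funext hc
  have key : ∀ (φ : L[[Fin n]].Formula (Fin k)) (x : Fin k → M),
      Formula.Realize (BoundedFormula.constantsVarsEquiv φ : L.Formula (Fin n ⊕ Fin k))
        (Sum.elim c x) ↔ φ.Realize x := by
    intro φ x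
    rw [← hc']
    exact BoundedFormula.realize_constantsVarsEquiv
  have e1 : ∀ x : Fin k → M, Fin.append c x ∘ finSumFinEquiv = Sum.elim c x := by
    intro x
    funext i
    rcases i with i | i <;> simp
  have e2 : ∀ x : Fin k → M, Sum.elim c x ∘ finSumFinEquiv.symm = Fin.append c x := by
    intro x
    rw [← e1]
    funext i
    simp
  constructor
  · intro h φ hφ
    have hq : (φ.relabel finSumFinEquiv.symm : L.Formula (Fin n ⊕ Fin k)).IsQF :=
      BoundedFormula.IsQF.relabel hφ _
    have hq' : (BoundedFormula.constantsVarsEquiv.symm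
        (φ.relabel finSumFinEquiv.symm : L.Formula (Fin n ⊕ Fin k)) :
          L[[Fin n]].Formula (Fin k)).IsQF :=
      isQF_mapTermRel _ _ _ hq
    have := h _ hq'
    rw [← key, ← key, Equiv.apply_symm_apply, Formula.realize_relabel, Formula.realize_relabel,
      e2, e2] at this
    exact this
  · intro h φ hφ
    have hq : (BoundedFormula.constantsVarsEquiv φ : L.Formula (Fin n ⊕ Fin k)).IsQF :=
      isQF_mapTermRel _ _ _ hφ
    have := h (Formula.relabel finSumFinEquiv (BoundedFormula.constantsVarsEquiv φ))
      (BoundedFormula.IsQF.relabel hq _)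
    rw [Formula.realize_relabel, Formula.realize_relabel, e1, e1, key, key] at this
    exact this

theorem bf_transfer {c : Fin n → M} (hc : ∀ i, ((L.con i : L[[Fin n]].Constants) : M) = c i)
    (α : Ordinal.{w}) : ∀ {k : ℕ} (a b : Fin k → M),
    BFEquiv L[[Fin n]] M M α k a b ↔
      BFEquiv L M M α (n + k) (Fin.append c a) (Fin.append c b) := by
  induction α using WellFoundedLT.induction with
  | ind α ih =>
    intro k a b
    constructor
    · intro h
      refine bf_intro ((qf_transfer hc a b).1 (bf_qf h)) (fun β hβ x => ?_) (fun β hβ x => ?_)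
      · obtain ⟨y, hy⟩ := bf_forth h hβ x
        refine ⟨y, ?_⟩
        rw [← Fin.append_snoc, ← Fin.append_snoc]
        exact (ih β hβ _ _).1 hy
      · obtain ⟨y, hy⟩ := bf_back h hβ x
        refine ⟨y, ?_⟩
        rw [← Fin.append_snoc, ← Fin.append_snoc]
        exact (ih β hβ _ _).1 hy
    · intro h
      refine bf_intro ((qf_transfer hc a b).2 (bf_qf h)) (fun β hβ x => ?_) (fun β hβ x => ?_)
      · obtain ⟨y, hy⟩ := bf_forth h hβ x
        refine ⟨y, (ih β hβ _ _).2 ?_⟩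
        rw [Fin.append_snoc, Fin.append_snoc]
        exact hy
      · obtain ⟨y, hy⟩ := bf_back h hβ x
        refine ⟨y, (ih β hβ _ _).2 ?_⟩
        rw [Fin.append_snoc, Fin.append_snoc]
        exact hy

theorem scottRank_aux {c : Fin n → M}
    (hc : ∀ i, ((L.con i : L[[Fin n]].Constants) : M) = c i) :
    ScottRank L[[Fin n]] M ≤ ScottRank L M ∧
      ScottRank L M ≤ ScottRank L[[Fin n]] M + Ordinal.omega0 + n := by
  constructor
  · refine scottRank_le fun k a b h α => ?_
    rw [bf_transfer hc] at h ⊢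
    exact scottRank_spec L M _ _ _ h α
  · refine scottRank_le fun k a b h α => ?_
    obtain ⟨d, hd⟩ := bf_play _ c h
    have hd' : BFEquiv L M M (ScottRank L[[Fin n]] M + Ordinal.omega0) (n + k)
        (Fin.append c a) (Fin.append d b) := by
      rw [append_swap c a, append_swap d b]
      exact bf_comp _ _ hd
    have hcd := bf_comp _ (Fin.castAdd k) hd'
    rw [append_comp_castAdd, append_comp_castAdd] at hcd
    have hcore := bf_core (β := ScottRank L[[Fin n]] M) (fun k x y hxy γ => by
      rw [← bf_transfer hc] at hxy ⊢
      exact scottRank_spec L[[Fin n]] M _ _ _ hxy γ) hcd α k a b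
      (bf_mono (le_add_of_nonneg_right zero_le) hd')
    have := bf_comp _ (Fin.natAdd n) hcore
    rwa [append_comp_natAdd, append_comp_natAdd] at this

end Transfer

end ScottTools

/-- If `N` is the expansion of `M` by constants for an `n`-tuple `c̄`, then
`sr(N) ≤ sr(M) ≤ sr(N) + ω + n`. -/
theorem scottRank_withConstants {L : FirstOrder.Language.{u, v}} {M : Type w}
    [L.Structure M] {n : ℕ} (c : Fin n → M) :
    @ScottRank (L[[Fin n]]) M (withConsts L M c) ≤ ScottRank L M ∧
      ScottRank L M ≤ @ScottRank (L[[Fin n]]) M (withConsts L M c) + Ordinal.omega0 + n := by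
  letI : (L[[Fin n]]).Structure M := withConsts L M c
  haveI : (L.lhomWithConstants (Fin n)).IsExpansionOn M :=
    ⟨fun _ _ => rfl, fun _ _ => rfl⟩
  exact scottRank_aux (c := c) (fun i => rfl)
end

section
/- Let (P, ≤, δ) ∈ ℙ, let T be a tame expansion of T_P, and let M ⊨ T. Let E_P be the equivalence relation on M defined by E_P(a,b) iff E_p(a,b) for all p ∈ P, and let N = M/E_P be the quotient structure (all relations of T's language are E_P-invariant, hence well-defined on classes), expanded by the coloring c given by c([a]) = 0 if the class [a]_{E_P} is infinite and c([a]) = |[a]_{E_P}| + 1 otherwise (colors realized as countably many unary predicates). Then for every ordinal α < ω₁ and all tuples ā = (a_i : i < n), b̄ = (b_i : i < n) from M: (i) if the a_i are pairwise distinct, the b_i are pairwise distinct, and (N, [ā]_{E_P}) ≡_α (N, [b̄]_{E_P}), then (M, ā) ≡_α (M, b̄); and (ii) if (M, ā) ≡_{ω+α} (M, b̄), then (N, [ā]_{E_P}) ≡_α (N, [b̄]_{E_P}). -/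
open FirstOrder

universe u v w

namespace TameQuot

open FirstOrder

/-- A purely relational language, with relation symbols `Rs k` of arity `k`. -/
def relLang (Rs : ℕ → Type) : FirstOrder.Language :=
  ⟨fun _ => Empty, Rs⟩

/-- The interpretation of the designated binary symbol `E p`. -/
def RelE {Rs : ℕ → Type} {M : Type} [(relLang Rs).Structure M] {P : Type}
    (E : P → Rs 2) (p : P) (a b : M) : Prop :=
  Language.Structure.RelMap (L := relLang Rs) (E p : (relLang Rs).Relations 2) ![a, b]

/-- `M` satisfies the axioms of `T_P` with respect to the designated symbols `E p`. -/
def ModelsTP {P : Type} (le : P → P → Prop) (δ : P → ℕ) {Rs : ℕ → Type} (E : P → Rs 2)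
    (M : Type) [(relLang Rs).Structure M] : Prop :=
  (∀ p : P, Equivalence (fun a b : M => RelE E p a b)) ∧
  (∀ p q : P, le p q → ∀ a b : M, RelE E q a b → RelE E p a b) ∧
  (∀ (q : P) (a : M), ∃ f : Fin (δ q) → M,
      (∀ (i : Fin (δ q)) (p : P), le p q → p ≠ q → RelE E p (f i) a) ∧
      (∀ i j : Fin (δ q), i ≠ j → ¬ RelE E q (f i) (f j)) ∧
      (∀ b : M, (∀ p : P, le p q → p ≠ q → RelE E p b a) → ∃ i, RelE E q b (f i))) ∧
  (∀ Q : Finset P, (∀ p q : P, le p q → q ∈ Q → p ∈ Q) →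
      ∀ a : P → M, (∀ p q : P, p ∈ Q → q ∈ Q → le p q → RelE E p (a p) (a q)) →
      ∃ z : M, ∀ q ∈ Q, RelE E q z (a q))

/-- The relation `E_P`: equivalence for every `p ∈ P`. -/
def EP {Rs : ℕ → Type} {M : Type} [(relLang Rs).Structure M] {P : Type}
    (E : P → Rs 2) (a b : M) : Prop :=
  ∀ p : P, RelE E p a b

/-- The language of the quotient: the original relational language together with
countably many unary predicates (the colors). -/
def qLang (Rs : ℕ → Type) : FirstOrder.Language :=
  ⟨fun _ => Empty, fun k => Rs k ⊕ (PLift (k = 1) × ℕ)⟩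

/-- The color of an `E_P`-class: `0` if the class is infinite, and (number of
elements) `+ 1` otherwise. -/
noncomputable def colorOf {M : Type} (r : M → M → Prop) (q : Quot r) : ℕ := by
  classical exact
    if ({b : M | Quot.mk r b = q}).Finite then ({b : M | Quot.mk r b = q}).ncard + 1 else 0

/-- The quotient structure `M/E_P`, expanded by the coloring predicates. -/
noncomputable def qStr (Rs : ℕ → Type) (M : Type) [(relLang Rs).Structure M]
    (r : M → M → Prop) : (qLang Rs).Structure (Quot r) where
  funMap := fun f _ => f.elim
  RelMap := fun {k} R x =>
    match R with
    | Sum.inl R0 => ∃ a : Fin k → M, (∀ i, Quot.mk r (a i) = x i) ∧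
        Language.Structure.RelMap (L := relLang Rs) (R0 : (relLang Rs).Relations k) a
    | Sum.inr ⟨h, c⟩ => colorOf r (x (Fin.cast h.down.symm 0)) = c

end TameQuot

open ScottTools TameQuot FirstOrder

namespace TameAux

theorem qf_iff (L : FirstOrder.Language.{0, 0}) [hL : ∀ k, IsEmpty (L.Functions k)]
    (M N : Type) [L.Structure M] [L.Structure N] {n : ℕ} (a : Fin n → M) (b : Fin n → N) :
    QFEquiv L M N a b ↔
      (∀ i j, a i = a j ↔ b i = b j) ∧
      (∀ (k : ℕ) (R : L.Relations k) (f : Fin k → Fin n),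
        Language.Structure.RelMap R (a ∘ f) ↔ Language.Structure.RelMap R (b ∘ f)) := by
  have hterm : ∀ t : L.Term (Fin n ⊕ Fin 0), ∃ i : Fin n, t = Language.Term.var (Sum.inl i) := by
    intro t
    cases t with
    | var x =>
      rcases x with i | i
      · exact ⟨i, rfl⟩
      · exact i.elim0
    | func f _ => exact ((hL _).false f).elim
  constructor
  · intro h
    refine ⟨fun i j => ?_, fun k R f => ?_⟩
    · have := h (Language.Term.bdEqual (n := 0) (Language.Term.var (Sum.inl i))
        (Language.Term.var (Sum.inl j)))
        (.of_isAtomic (.equal _ _))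
      simpa [Language.Formula.Realize] using this
    · have := h (Language.Relations.boundedFormula (l := 0) R
        (fun i => Language.Term.var (Sum.inl (f i))))
        (.of_isAtomic (.rel _ _))
      simpa [Language.Formula.Realize, Language.BoundedFormula.realize_rel, Function.comp_def]
        using this
  · rintro ⟨h1, h2⟩ φ hφ
    unfold Language.Formula at φ
    unfold Language.Formula.Realize
    induction hφ with
    | falsum => rfl
    | of_isAtomic h =>
      cases h with
      | equal t₁ t₂ =>
        obtain ⟨i, rfl⟩ := hterm t₁
        obtain ⟨j, rfl⟩ := hterm t₂
        simpa using h1 i j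
      | rel R ts =>
        choose f hf using fun i => hterm (ts i)
        have := h2 _ R f
        simpa [Language.BoundedFormula.realize_rel, hf, Function.comp_def] using this
    | imp _ _ ih1 ih2 => simp only [Language.BoundedFormula.realize_imp, ih1, ih2]

instance relLang_empty (Rs : ℕ → Type) (k : ℕ) : IsEmpty ((relLang Rs).Functions k) :=
  inferInstanceAs (IsEmpty Empty)

instance qLang_empty (Rs : ℕ → Type) (k : ℕ) : IsEmpty ((qLang Rs).Functions k) :=
  inferInstanceAs (IsEmpty Empty)

theorem bf_mono (L : FirstOrder.Language.{0, 0}) (M N : Type) [L.Structure M] [L.Structure N]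
    {α β : Ordinal.{0}} (h : β ≤ α) {n : ℕ} {a : Fin n → M} {b : Fin n → N}
    (H : BFEquiv L M N α n a b) : BFEquiv L M N β n a b := by
  rw [BFEquiv] at H ⊢
  exact ⟨H.1, fun γ hγ => H.2 γ (hγ.trans_le h)⟩

theorem bf_symm (L : FirstOrder.Language.{0, 0}) (M N : Type) [L.Structure M] [L.Structure N]
    (α : Ordinal.{0}) : ∀ {n : ℕ} {a : Fin n → M} {b : Fin n → N},
    BFEquiv L M N α n a b → BFEquiv L N M α n b a := by
  induction α using WellFoundedLT.induction with
  | ind α ih =>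
    intro n a b H
    rw [BFEquiv] at H ⊢
    refine ⟨fun φ hφ => (H.1 φ hφ).symm, fun γ hγ => ⟨fun x => ?_, fun y => ?_⟩⟩
    · obtain ⟨y, hy⟩ := (H.2 γ hγ).2 x
      exact ⟨y, ih γ hγ hy⟩
    · obtain ⟨y, hy⟩ := (H.2 γ hγ).1 y
      exact ⟨y, ih γ hγ hy⟩

section
variable {P : Type} {Rs : ℕ → Type} (E : P → Rs 2) (M : Type) [(relLang Rs).Structure M]

/-- The relations agree along the two tuples. -/
def RelAgree {n : ℕ} (a b : Fin n → M) : Prop :=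
  ∀ (k : ℕ) (R : Rs k) (f : Fin k → Fin n),
    Language.Structure.RelMap (L := relLang Rs) (R : (relLang Rs).Relations k) (a ∘ f) ↔
      Language.Structure.RelMap (L := relLang Rs) (R : (relLang Rs).Relations k) (b ∘ f)

theorem mQF {n : ℕ} (a b : Fin n → M) :
    QFEquiv (relLang Rs) M M a b ↔
      (∀ i j, a i = a j ↔ b i = b j) ∧ RelAgree (Rs := Rs) M a b :=
  qf_iff (relLang Rs) M M a b

variable {M} in
theorem relAgree_E {n : ℕ} {a b : Fin n → M} (h : RelAgree (Rs := Rs) M a b) (i j : Fin n) :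
    EP E (a i) (a j) ↔ EP E (b i) (b j) := by
  refine forall_congr' fun p => ?_
  have := h 2 (E p) ![i, j]
  have e : ∀ c : Fin n → M, c ∘ ![i, j] = ![c i, c j] := by
    intro c; ext k; fin_cases k <;> rfl
  rw [e, e] at this
  exact this

variable {M} in
theorem mk_eq (hE : ∀ p : P, Equivalence (fun a b : M => RelE E p a b)) (x y : M) :
    Quot.mk (EP E) x = Quot.mk (EP E) y ↔ EP E x y := by
  have : Equivalence (EP E (M := M)) :=
    ⟨fun x p => (hE p).refl x, fun h p => (hE p).symm (h p),
      fun h h' p => (hE p).trans (h p) (h' p)⟩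
  exact this.quot_mk_eq_iff x y

theorem nQF (hE : ∀ p : P, Equivalence (fun a b : M => RelE E p a b))
    (htame : ∀ (k : ℕ) (R : Rs k), ∃ p : P, ∀ x y : Fin k → M,
      (∀ i, RelE E p (x i) (y i)) →
        (Language.Structure.RelMap (L := relLang Rs) (R : (relLang Rs).Relations k) x ↔
          Language.Structure.RelMap (L := relLang Rs) (R : (relLang Rs).Relations k) y))
    {n : ℕ} (a b : Fin n → M) :
    @QFEquiv (qLang Rs) (Quot (EP E)) (Quot (EP E)) (qStr Rs M (EP E)) (qStr Rs M (EP E)) n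
      (fun i => Quot.mk (EP E) (a i)) (fun i => Quot.mk (EP E) (b i)) ↔
      RelAgree (Rs := Rs) M a b ∧
        ∀ i, colorOf (EP E) (Quot.mk (EP E) (a i)) = colorOf (EP E) (Quot.mk (EP E) (b i)) := by
  letI := qStr Rs M (EP E)
  have hrel : ∀ (k : ℕ) (R : Rs k) (c : Fin k → M),
      (∃ d : Fin k → M, (∀ i, Quot.mk (EP E) (d i) = Quot.mk (EP E) (c i)) ∧
        Language.Structure.RelMap (L := relLang Rs) (R : (relLang Rs).Relations k) d) ↔
      Language.Structure.RelMap (L := relLang Rs) (R : (relLang Rs).Relations k) c := by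
    intro k R c
    obtain ⟨p, hp⟩ := htame k R
    constructor
    · rintro ⟨d, h1, h2⟩
      exact (hp d c fun i => (mk_eq E hE _ _).1 (h1 i) p).1 h2
    · intro h
      exact ⟨c, fun _ => rfl, h⟩
  rw [qf_iff]
  constructor
  · rintro ⟨-, h⟩
    refine ⟨fun k R f => ?_, fun i => ?_⟩
    · exact ((hrel k R (a ∘ f)).symm.trans (h k (Sum.inl R) f)).trans (hrel k R (b ∘ f))
    · have := h 1 (Sum.inr ⟨⟨rfl⟩, colorOf (EP E) (Quot.mk (EP E) (a i))⟩) (fun _ => i)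
      exact (this.1 rfl).symm
  · rintro ⟨h1, h2⟩
    refine ⟨fun i j => ?_, ?_⟩
    · rw [mk_eq E hE, mk_eq E hE]
      exact relAgree_E E h1 i j
    · rintro k (R | ⟨⟨rfl⟩, c⟩) f
      · exact ((hrel k R (a ∘ f)).trans (h1 k R f)).trans (hrel k R (b ∘ f)).symm
      · change colorOf (EP E) (Quot.mk (EP E) (a (f _))) = c ↔
          colorOf (EP E) (Quot.mk (EP E) (b (f _))) = c
        rw [h2]

variable {M} in
theorem colorOf_eq_iff {r : M → M → Prop} (q q' : Quot r) :
    colorOf r q = colorOf r q' ↔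
      ({b : M | Quot.mk r b = q}).encard = ({b : M | Quot.mk r b = q'}).encard := by
  unfold colorOf
  generalize {b : M | Quot.mk r b = q} = A
  generalize {b : M | Quot.mk r b = q'} = B
  by_cases hA : A.Finite <;> by_cases hB : B.Finite
  · rw [if_pos hA, if_pos hB, ← hA.cast_ncard_eq, ← hB.cast_ncard_eq]
    simp
  · rw [if_pos hA, if_neg hB, (Set.not_finite.1 hB).encard_eq]
    simpa using hA
  · rw [if_neg hA, if_pos hB, (Set.not_finite.1 hA).encard_eq]
    simpa [eq_comm] using hB
  · rw [if_neg hA, if_neg hB, (Set.not_finite.1 hB).encard_eq, (Set.not_finite.1 hA).encard_eq]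
    simp

/-- Extending a matching by a new element of a class of the same size. -/
theorem exists_new {n : ℕ} {a b : Fin n → M} (hab : ∀ i j, a i = a j ↔ b i = b j)
    {A B : Set M} (hAB : A.encard = B.encard) (hm : ∀ i, a i ∈ A ↔ b i ∈ B)
    {x : M} (hx : x ∈ A) : ∃ y ∈ B, ∀ i, a i = x ↔ b i = y := by
  by_cases h : ∃ i, a i = x
  · obtain ⟨i, rfl⟩ := h
    exact ⟨b i, (hm i).1 hx, fun j => hab j i⟩
  · push Not at h
    by_contra hcon
    have hcov : ∀ y ∈ B, ∃ i, b i = y := by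
      intro y hy
      by_contra hno
      push Not at hno
      exact hcon ⟨y, hy, fun i => iff_of_false (h i) (hno i)⟩
    have hBf : B.Finite := (Set.finite_range b).subset fun y hy => hcov y hy
    have hAf : A.Finite := by
      rw [← Set.encard_lt_top_iff, hAB]; exact hBf.encard_lt_top
    have hne : Nonempty (Fin n) := by
      have hB : B.Nonempty := by
        rw [← Set.encard_pos, ← hAB, Set.encard_pos]
        exact ⟨x, hx⟩
      obtain ⟨y, hy⟩ := hB
      exact ⟨(hcov y hy).choose⟩
    choose! g hg using hcov
    have h1 : B.ncard ≤ (A \ {x}).ncard := by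
      refine Set.ncard_le_ncard_of_injOn (fun y => a (g y)) ?_ ?_ hAf.diff
      · intro y hy
        refine ⟨(hm _).2 ?_, h _⟩
        rw [hg y hy]; exact hy
      · intro y hy z hz hyz
        have := (hab _ _).1 hyz
        rwa [hg y hy, hg z hz] at this
    have h2 := Set.ncard_diff_singleton_lt_of_mem hx hAf
    have h3 : A.ncard = B.ncard := by simp [Set.ncard, hAB]
    omega

theorem snoc_mk {n : ℕ} (a : Fin n → M) (x : M) :
    (Fin.snoc (fun i => Quot.mk (EP E) (a i)) (Quot.mk (EP E) x) : Fin (n + 1) → Quot (EP E)) =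
      fun i => Quot.mk (EP E) ((Fin.snoc a x : Fin (n + 1) → M) i) := by
  ext i
  refine Fin.lastCases ?_ (fun i => ?_) i <;> simp

theorem snoc_eq {n : ℕ} {a b : Fin n → M} (hab : ∀ i j, a i = a j ↔ b i = b j) {x y : M}
    (h : ∀ i, a i = x ↔ b i = y) (i j : Fin (n + 1)) :
    (Fin.snoc a x : Fin (n + 1) → M) i = (Fin.snoc a x : Fin (n + 1) → M) j ↔
    (Fin.snoc b y : Fin (n + 1) → M) i = (Fin.snoc b y : Fin (n + 1) → M) j := by
  refine Fin.lastCases ?_ (fun i => ?_) i <;> refine Fin.lastCases ?_ (fun j => ?_) j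
  · simp
  · simpa [eq_comm] using h j
  · simpa using h i
  · simpa using hab i j

theorem part_one (hE : ∀ p : P, Equivalence (fun a b : M => RelE E p a b))
    (htame : ∀ (k : ℕ) (R : Rs k), ∃ p : P, ∀ x y : Fin k → M,
      (∀ i, RelE E p (x i) (y i)) →
        (Language.Structure.RelMap (L := relLang Rs) (R : (relLang Rs).Relations k) x ↔
          Language.Structure.RelMap (L := relLang Rs) (R : (relLang Rs).Relations k) y))
    (α : Ordinal.{0}) : ∀ {n : ℕ} (a b : Fin n → M), (∀ i j, a i = a j ↔ b i = b j) →
      @BFEquiv (qLang Rs) (Quot (EP E)) (Quot (EP E)) (qStr Rs M (EP E)) (qStr Rs M (EP E))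
        α n (fun i => Quot.mk (EP E) (a i)) (fun i => Quot.mk (EP E) (b i)) →
      BFEquiv (relLang Rs) M M α n a b := by
  letI := qStr Rs M (EP E)
  induction α using WellFoundedLT.induction with
  | ind α ih =>
    intro n a b hab H
    rw [BFEquiv] at H ⊢
    refine ⟨(mQF M a b).2 ⟨hab, ((nQF E M hE htame a b).1 H.1).1⟩, fun γ hγ => ?_⟩
    -- the extension lemma
    have key : ∀ x y0 : M,
        @BFEquiv (qLang Rs) (Quot (EP E)) (Quot (EP E)) (qStr Rs M (EP E)) (qStr Rs M (EP E))
          γ (n + 1) (Fin.snoc (fun i => Quot.mk (EP E) (a i)) (Quot.mk (EP E) x))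
            (Fin.snoc (fun i => Quot.mk (EP E) (b i)) (Quot.mk (EP E) y0)) →
        ({c : M | Quot.mk (EP E) c = Quot.mk (EP E) x}).encard =
          ({c : M | Quot.mk (EP E) c = Quot.mk (EP E) y0}).encard ∧
        (∀ i, a i ∈ {c : M | Quot.mk (EP E) c = Quot.mk (EP E) x} ↔
          b i ∈ {c : M | Quot.mk (EP E) c = Quot.mk (EP E) y0}) := by
      intro x y0 h
      rw [snoc_mk, snoc_mk, BFEquiv] at h
      obtain ⟨h1, h2⟩ := (nQF E M hE htame _ _).1 h.1
      refine ⟨?_, fun i => ?_⟩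
      · rw [← colorOf_eq_iff]
        simpa using h2 (Fin.last n)
      · have := relAgree_E E h1 i.castSucc (Fin.last n)
        simpa [mk_eq E hE] using this
    constructor
    · intro x
      obtain ⟨y', hy'⟩ := (H.2 γ hγ).1 (Quot.mk _ x)
      obtain ⟨y0, rfl⟩ := Quot.exists_rep y'
      obtain ⟨k1, k2⟩ := key x y0 hy'
      obtain ⟨y, hy, hxy⟩ := exists_new M hab k1 k2 (x := x) rfl
      refine ⟨y, ih γ hγ _ _ (snoc_eq M hab hxy) ?_⟩
      rw [← snoc_mk, ← snoc_mk, show Quot.mk (EP E) y = Quot.mk (EP E) y0 from hy]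
      exact hy'
    · intro y
      obtain ⟨x', hx'⟩ := (H.2 γ hγ).2 (Quot.mk _ y)
      obtain ⟨x0, rfl⟩ := Quot.exists_rep x'
      obtain ⟨k1, k2⟩ := key x0 y hx'
      obtain ⟨x, hx, hxy⟩ := exists_new M (fun i j => (hab i j).symm) k1.symm
        (fun i => (k2 i).symm) (x := y) rfl
      refine ⟨x, ih γ hγ _ _ (snoc_eq M hab fun i => (hxy i).symm) ?_⟩
      rw [← snoc_mk, ← snoc_mk, show Quot.mk (EP E) x = Quot.mk (EP E) x0 from hx]
      exact hx'

theorem transfer (F : Finset M) : ∀ {n : ℕ} (a b : Fin n → M) (i : Fin n),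
    BFEquiv (relLang Rs) M M (F.card : Ordinal.{0}) n a b → (∀ x ∈ F, EP E x (a i)) →
    ∃ G : Finset M, G.card = F.card ∧ (∀ y ∈ G, EP E y (b i)) ∧ ∀ j, a j ∈ F ↔ b j ∈ G := by
  classical
  induction F using Finset.induction_on with
  | empty => intro n a b i _ _; exact ⟨∅, by simp⟩
  | insert x F hx ih =>
    intro n a b i H hF
    rw [BFEquiv, Finset.card_insert_of_notMem hx] at H
    obtain ⟨y, hy⟩ := (H.2 (F.card : Ordinal.{0}) (by exact_mod_cast Nat.lt_succ_self _)).1 x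
    obtain ⟨G, hG1, hG2, hG3⟩ := ih _ _ i.castSucc hy (by
      intro z hz
      simpa using hF z (Finset.mem_insert_of_mem hz))
    rw [BFEquiv] at hy
    obtain ⟨e1, e2⟩ := (mQF M _ _).1 hy.1
    have hyG : y ∉ G := by
      have := hG3 (Fin.last n)
      simp only [Fin.snoc_last] at this
      exact fun h => hx (this.2 h)
    refine ⟨insert y G, ?_, ?_, ?_⟩
    · rw [Finset.card_insert_of_notMem hx, Finset.card_insert_of_notMem hyG, hG1]
    · intro z hz
      rcases Finset.mem_insert.1 hz with rfl | hz
      · have := relAgree_E E e2 (Fin.last n) i.castSucc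
        simp only [Fin.snoc_last, Fin.snoc_castSucc] at this
        exact this.1 (hF x (Finset.mem_insert_self _ _))
      · simpa using hG2 z hz
    · intro j
      have h1 := hG3 j.castSucc
      have h2 := e1 j.castSucc (Fin.last n)
      simp only [Fin.snoc_last, Fin.snoc_castSucc] at h1 h2
      rw [Finset.mem_insert, Finset.mem_insert, h1, h2]

theorem encard_le (hE : ∀ p : P, Equivalence (fun a b : M => RelE E p a b))
    {n : ℕ} (a b : Fin n → M) (i : Fin n)
    (H : BFEquiv (relLang Rs) M M Ordinal.omega0 n a b) :
    ({c : M | Quot.mk (EP E) c = Quot.mk (EP E) (a i)}).encard ≤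
      ({c : M | Quot.mk (EP E) c = Quot.mk (EP E) (b i)}).encard := by
  rw [← ENat.forall_natCast_le_iff_le]
  intro m hm
  obtain ⟨t, ht, htc⟩ := Set.exists_subset_encard_eq hm
  have htf : t.Finite := Set.finite_of_encard_eq_coe htc
  lift t to Finset M using htf
  obtain ⟨G, hG1, hG2, -⟩ := transfer E M t a b i
    (bf_mono _ _ _ (Ordinal.natCast_lt_omega0 _).le H)
    (fun x hx => (mk_eq E hE _ _).1 (ht hx))
  rw [← htc, Set.encard_coe_eq_coe_finsetCard, ← hG1, ← Set.encard_coe_eq_coe_finsetCard]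
  exact Set.encard_le_encard fun y hy => (mk_eq E hE _ _).2 (hG2 y hy)

theorem part_two (hE : ∀ p : P, Equivalence (fun a b : M => RelE E p a b))
    (htame : ∀ (k : ℕ) (R : Rs k), ∃ p : P, ∀ x y : Fin k → M,
      (∀ i, RelE E p (x i) (y i)) →
        (Language.Structure.RelMap (L := relLang Rs) (R : (relLang Rs).Relations k) x ↔
          Language.Structure.RelMap (L := relLang Rs) (R : (relLang Rs).Relations k) y))
    (α : Ordinal.{0}) : ∀ {n : ℕ} (a b : Fin n → M),
      BFEquiv (relLang Rs) M M (Ordinal.omega0 + α) n a b →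
      @BFEquiv (qLang Rs) (Quot (EP E)) (Quot (EP E)) (qStr Rs M (EP E)) (qStr Rs M (EP E))
        α n (fun i => Quot.mk (EP E) (a i)) (fun i => Quot.mk (EP E) (b i)) := by
  letI := qStr Rs M (EP E)
  induction α using WellFoundedLT.induction with
  | ind α ih =>
    intro n a b H
    have Hω := bf_mono _ _ _ (le_self_add : Ordinal.omega0 ≤ Ordinal.omega0 + α) H
    rw [BFEquiv] at H ⊢
    refine ⟨(nQF E M hE htame a b).2 ⟨((mQF M a b).1 H.1).2, fun i => ?_⟩, fun γ hγ => ?_⟩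
    · rw [colorOf_eq_iff]
      exact le_antisymm (encard_le E M hE a b i Hω) (encard_le E M hE b a i (bf_symm _ _ _ _ Hω))
    · have H2 := H.2 (Ordinal.omega0 + γ) (by gcongr)
      constructor
      · intro x'
        obtain ⟨x, rfl⟩ := Quot.exists_rep x'
        obtain ⟨y, hy⟩ := H2.1 x
        refine ⟨Quot.mk _ y, ?_⟩
        rw [snoc_mk, snoc_mk]
        exact ih γ hγ _ _ hy
      · intro y'
        obtain ⟨y, rfl⟩ := Quot.exists_rep y'
        obtain ⟨x, hx⟩ := H2.2 y
        refine ⟨Quot.mk _ x, ?_⟩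
        rw [snoc_mk, snoc_mk]
        exact ih γ hγ _ _ hx

end

end TameAux

/-- Let `T` be a tame expansion of `T_P` and `M ⊨ T`; let `N = M/E_P` be the colored
quotient structure.  Then for every `α < ω₁`: (i) if `ā`, `b̄` are tuples of pairwise
distinct elements of `M` and `(N, [ā]) ≡_α (N, [b̄])`, then `(M, ā) ≡_α (M, b̄)`; and
(ii) if `(M, ā) ≡_{ω+α} (M, b̄)`, then `(N, [ā]) ≡_α (N, [b̄])`. -/
theorem bfEquiv_quotient_coloring
    {P : Type} [PartialOrder P] [Countable P]
    (hdf : ∀ p : P, (Set.Iic p).Finite)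
    (δ : P → ℕ) (hδ : ∀ p, 2 ≤ δ p)
    {Rs : ℕ → Type} (E : P → Rs 2)
    (M : Type) [(relLang Rs).Structure M]
    (hTP : ModelsTP (· ≤ · : P → P → Prop) δ E M)
    (htame : ∀ (k : ℕ) (R : Rs k), ∃ p : P, ∀ x y : Fin k → M,
      (∀ i, RelE E p (x i) (y i)) →
        (Language.Structure.RelMap (L := relLang Rs) (R : (relLang Rs).Relations k) x ↔
          Language.Structure.RelMap (L := relLang Rs) (R : (relLang Rs).Relations k) y))
    (α : Ordinal.{0}) (hα : α < (Cardinal.aleph 1).ord)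
    (n : ℕ) (a b : Fin n → M) :
    (Function.Injective a → Function.Injective b →
      @BFEquiv (qLang Rs) (Quot (EP E)) (Quot (EP E)) (qStr Rs M (EP E)) (qStr Rs M (EP E))
        α n (fun i => Quot.mk (EP E) (a i)) (fun i => Quot.mk (EP E) (b i)) →
      BFEquiv (relLang Rs) M M α n a b) ∧
    (BFEquiv (relLang Rs) M M (Ordinal.omega0 + α) n a b →
      @BFEquiv (qLang Rs) (Quot (EP E)) (Quot (EP E)) (qStr Rs M (EP E)) (qStr Rs M (EP E))
        α n (fun i => Quot.mk (EP E) (a i)) (fun i => Quot.mk (EP E) (b i))) := by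
  exact ⟨fun ha hb => TameAux.part_one E M hTP.1 htame α a b
      (fun i j => by rw [ha.eq_iff, hb.eq_iff]),
    TameAux.part_two E M hTP.1 htame α a b⟩
end

section
/- Let (P, ≤, δ) ∈ ℙ. Any two tame expansions of 𝔐_P in the same language that are elementarily equivalent are isomorphic. -/
namespace MP

open FirstOrder

/-- A purely relational language, with relation symbols `Rs k` of arity `k`. -/
def relLang (Rs : ℕ → Type v) : FirstOrder.Language :=
  ⟨fun _ => Empty, Rs⟩

/-- The universe of `𝔐_P`: the product `∏_{p ∈ P} δ(p)`. -/
abbrev MProd {P : Type u} (δ : P → ℕ) : Type u := (p : P) → Fin (δ p)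

/-- The standard crosscutting equivalence relation `E_p` on `𝔐_P`:
`f E_p g` iff `f q = g q` for all `q ≤ p`. -/
def stdE {P : Type u} [PartialOrder P] (δ : P → ℕ) (p : P) (f g : MProd δ) : Prop :=
  ∀ q : P, q ≤ p → f q = g q

/-- A structure on `𝔐_P` in a language with designated binary symbols `E p` is a tame
expansion of `𝔐_P` if the symbols `E p` are interpreted standardly and every relation
of the language is `E_p`-invariant for some `p`. -/
def IsTameExpansion {P : Type u} [PartialOrder P] (δ : P → ℕ) {Rs : ℕ → Type v}
    (E : P → Rs 2) (S : (relLang Rs).Structure (MProd δ)) : Prop :=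
  (∀ (p : P) (x : Fin 2 → MProd δ),
    S.RelMap (E p : (relLang Rs).Relations 2) x ↔ stdE δ p (x 0) (x 1)) ∧
  (∀ (k : ℕ) (R : Rs k), ∃ p : P, ∀ x y : Fin k → MProd δ,
    (∀ i, stdE δ p (x i) (y i)) →
      (S.RelMap (R : (relLang Rs).Relations k) x ↔ S.RelMap (R : (relLang Rs).Relations k) y))

end MP

open MP FirstOrder

namespace MPaux

open Classical in
/-- Extension by zero of a partial choice function. -/
noncomputable def ext {P : Type u} (δ : P → ℕ) (hδ : ∀ p, 2 ≤ δ p) (Q : Set P)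
    (a : (q : Q) → Fin (δ q)) : MProd δ :=
  fun p => if h : p ∈ Q then a ⟨p, h⟩ else ⟨0, by have := hδ p; omega⟩

lemma ext_of_mem {P : Type u} (δ : P → ℕ) (hδ : ∀ p, 2 ≤ δ p) (Q : Set P)
    (a : (q : Q) → Fin (δ q)) (p : P) (h : p ∈ Q) : ext δ hδ Q a p = a ⟨p, h⟩ := by
  simp [ext, h]

/-- Restriction. -/
def res {P : Type u} {δ : P → ℕ} (Q : Set P) (f : MProd δ) : (q : Q) → Fin (δ q) :=
  fun q => f q

/-- The space of coherent maps. -/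
abbrev Y {P : Type u} [PartialOrder P] (δ : P → ℕ) : Type u :=
  (p : P) → (((q : Set.Iic p) → Fin (δ q)) → Fin (δ p))

/-- The map given by a point of `Y`. -/
def sig {P : Type u} [PartialOrder P] {δ : P → ℕ} (y : Y δ) (f : MProd δ) : MProd δ :=
  fun p => y p (res (Set.Iic p) f)

lemma sig_stdE {P : Type u} [PartialOrder P] {δ : P → ℕ} (y : Y δ) (p : P) (f g : MProd δ)
    (h : stdE δ p f g) : stdE δ p (sig y f) (sig y g) := by
  intro q hq
  unfold sig
  congr 1
  funext r
  exact h r (le_trans r.2 hq)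

/-- Finite families of relations: a finite configuration can be copied. -/
lemma copy {M : Type u} {Rs : ℕ → Type v} (S₁ S₂ : (relLang Rs).Structure M)
    (heq : @Language.ElementarilyEquivalent (relLang Rs) M M S₁ S₂)
    (F : Set (Σ k, Rs k)) (hF : F.Finite) {A : Type u} [Finite A] (e : A → M) :
    ∃ t : A → M, ∀ R ∈ F, ∀ a : Fin R.1 → A,
      (S₁.RelMap (R.2 : (relLang Rs).Relations R.1) (fun i => e (a i)) ↔
        S₂.RelMap (R.2 : (relLang Rs).Relations R.1) (fun i => t (a i))) := by
  classical
  haveI := hF.to_subtype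
  let lit : (Σ R : F, (Fin R.1.1 → A)) → (relLang Rs).Formula (Empty ⊕ A) := fun c =>
    let at0 : (relLang Rs).Formula (Empty ⊕ A) :=
      Language.Relations.formula (c.1.1.2 : (relLang Rs).Relations c.1.1.1)
        (fun i => Language.Term.var (Sum.inr (c.2 i)))
    if S₁.RelMap (c.1.1.2 : (relLang Rs).Relations c.1.1.1) (fun i => e (c.2 i))
      then at0 else at0.not
  let φ : (relLang Rs).Sentence := Language.Formula.iExs A (Language.BoundedFormula.iInf lit)
  have h1 : @Language.Sentence.Realize (relLang Rs) M S₁ φ := by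
    letI := S₁
    refine Language.Formula.realize_iExs.2 ⟨e, ?_⟩
    refine Language.BoundedFormula.realize_iInf.2 ?_
    intro c
    by_cases hc : S₁.RelMap (c.1.1.2 : (relLang Rs).Relations c.1.1.1) (fun i => e (c.2 i))
    · simp only [lit, hc, if_true]
      exact Language.Formula.realize_rel.2 hc
    · simp only [lit, hc, if_false]
      exact fun h => hc (Language.Formula.realize_rel.1 h)
  have h2 : @Language.Sentence.Realize (relLang Rs) M S₂ φ :=
    (@Language.elementarilyEquivalent_iff (relLang Rs) M M S₁ S₂).1 heq φ |>.1 h1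
  letI := S₂
  obtain ⟨t, ht⟩ := Language.Formula.realize_iExs.1 h2
  refine ⟨t, fun R hR a => ?_⟩
  have := Language.BoundedFormula.realize_iInf.1 ht ⟨⟨R, hR⟩, a⟩
  by_cases hc : S₁.RelMap (R.2 : (relLang Rs).Relations R.1) (fun i => e (a i))
  · simp only [lit, hc, if_true] at this
    exact ⟨fun _ => Language.Formula.realize_rel.1 this, fun _ => hc⟩
  · simp only [lit, hc, if_false] at this
    exact ⟨fun h => absurd h hc, fun h => absurd (Language.Formula.realize_rel.2 h) this⟩

end MPaux

open MPaux

/-- Two elementarily equivalent tame expansions of `𝔐_P` (in the same language)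
are isomorphic. -/
theorem tame_expansions_isomorphic_of_elementarilyEquivalent
    {P : Type u} [PartialOrder P] [Countable P]
    (hdf : ∀ p : P, (Set.Iic p).Finite)
    (δ : P → ℕ) (hδ : ∀ p, 2 ≤ δ p)
    {Rs : ℕ → Type v} (E : P → Rs 2)
    (S₁ S₂ : (relLang Rs).Structure (MProd δ))
    (h₁ : IsTameExpansion δ E S₁) (h₂ : IsTameExpansion δ E S₂)
    (heq : @Language.ElementarilyEquivalent (relLang Rs) (MProd δ) (MProd δ) S₁ S₂) :
    Nonempty (@Language.Equiv (relLang Rs) (MProd δ) (MProd δ) S₁ S₂) := by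
  classical
  haveI : ∀ p : P, Finite (Set.Iic p) := fun p => (hdf p).to_subtype
  choose p₁ hp₁ using h₁.2
  choose p₂ hp₂ using h₂.2
  let C : (Σ k, Rs k) → Set (Y δ) := fun R => {y | ∀ x : Fin R.1 → MProd δ,
    (S₁.RelMap (R.2 : (relLang Rs).Relations R.1) x ↔
      S₂.RelMap (R.2 : (relLang Rs).Relations R.1) (fun i => sig y (x i)))}
  have hclosed : ∀ R, IsClosed (C R) := by
    rintro ⟨k, R⟩
    have : C ⟨k, R⟩ = ⋂ x : Fin k → MProd δ, {y | (S₁.RelMap (R : (relLang Rs).Relations k) x ↔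
      S₂.RelMap (R : (relLang Rs).Relations k) (fun i => sig y (x i)))} := by
      ext y; simp [C]
    rw [this]
    refine isClosed_iInter fun x => ?_
    let Z := (i : Fin k) → (q : Set.Iic (p₂ k R)) → Fin (δ q)
    let ρ : Y δ → Z := fun y i q => sig y (x i) q
    have hρ : Continuous ρ := by
      refine continuous_pi fun i => continuous_pi fun q => ?_
      exact (continuous_apply (res (Set.Iic (q : P)) (x i))).comp (continuous_apply (q : P))
    have hset : {y | (S₁.RelMap (R : (relLang Rs).Relations k) x ↔
      S₂.RelMap (R : (relLang Rs).Relations k) (fun i => sig y (x i)))} =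
      ρ ⁻¹' {z | (S₁.RelMap (R : (relLang Rs).Relations k) x ↔
      S₂.RelMap (R : (relLang Rs).Relations k) (fun i => ext δ hδ _ (z i)))} := by
      ext y
      simp only [Set.mem_setOf_eq, Set.mem_preimage]
      rw [hp₂ k R (fun i => sig y (x i)) (fun i => ext δ hδ _ (ρ y i))]
      intro i q hq
      rw [ext_of_mem δ hδ _ _ q hq]
    rw [hset]
    exact (isClosed_discrete _).preimage hρ
  have hfin : ∀ u : Finset (Σ k, Rs k), (⋂ R ∈ u, C R).Nonempty := by
    intro u
    let Q : Set P := ⋃ R ∈ u, (Set.Iic (p₁ R.1 R.2) ∪ Set.Iic (p₂ R.1 R.2))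
    have hQ : Q.Finite := by
      refine Set.Finite.biUnion u.finite_toSet fun R _ => (hdf _).union (hdf _)
    haveI : Finite Q := hQ.to_subtype
    let F : Set (Σ k, Rs k) := (u : Set (Σ k, Rs k)) ∪ (fun q => ⟨2, E q⟩) '' Q
    have hF : F.Finite := u.finite_toSet.union (hQ.image _)
    have hdown : ∀ p q, q ≤ p → p ∈ Q → q ∈ Q := by
      intro p q hqp hp
      simp only [Q, Set.mem_iUnion] at hp ⊢
      obtain ⟨R, hR, h | h⟩ := hp
      · exact ⟨R, hR, Or.inl (le_trans hqp h)⟩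
      · exact ⟨R, hR, Or.inr (le_trans hqp h)⟩
    obtain ⟨t, ht⟩ := copy S₁ S₂ heq F hF (A := (q : Q) → Fin (δ q)) (ext δ hδ Q)
    have htE : ∀ q ∈ Q, ∀ f g : MProd δ, stdE δ q f g →
        stdE δ q (t (res Q f)) (t (res Q g)) := by
      intro q hq f g hfg
      have h := ht ⟨2, E q⟩ (Or.inr ⟨q, hq, rfl⟩) ![res Q f, res Q g]
      have h' := (h₂.1 q _).1 (h.1 ((h₁.1 q _).2 ?_))
      · simpa using h'
      · intro r hr
        have hrQ := hdown q r hr hq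
        simp only [Matrix.cons_val_zero, Matrix.cons_val_one]
        rw [ext_of_mem _ _ _ _ r hrQ, ext_of_mem _ _ _ _ r hrQ]
        exact hfg r hr
    let y : Y δ := fun p v => t (res Q (ext δ hδ (Set.Iic p) v)) p
    refine ⟨y, ?_⟩
    simp only [Set.mem_iInter]
    intro R hR x
    have hp₁Q : p₁ R.1 R.2 ∈ Q := by
      simp only [Q, Set.mem_iUnion]; exact ⟨R, hR, Or.inl le_rfl⟩
    have hp₂Q : p₂ R.1 R.2 ∈ Q := by
      simp only [Q, Set.mem_iUnion]; exact ⟨R, hR, Or.inr le_rfl⟩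
    rw [hp₁ R.1 R.2 x (fun i => ext δ hδ Q (res Q (x i))),
      ht R (Or.inl hR) (fun i => res Q (x i)),
      hp₂ R.1 R.2 (fun i => t (res Q (x i))) (fun i => sig y (x i))]
    · intro i q hq
      refine htE q (hdown _ _ hq hp₂Q) _ _ ?_ q le_rfl
      intro r hr
      rw [ext_of_mem _ _ _ _ r hr]
      rfl
    · intro i q hq
      rw [ext_of_mem _ _ _ _ q (hdown _ _ hq hp₁Q)]
      rfl
  obtain ⟨y, hy⟩ : (⋂ R, C R).Nonempty :=
    CompactSpace.iInter_nonempty hclosed hfin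
  have hy' : ∀ (k : ℕ) (R : Rs k) (x : Fin k → MProd δ),
    (S₁.RelMap (R : (relLang Rs).Relations k) x ↔
      S₂.RelMap (R : (relLang Rs).Relations k) (fun i => sig y (x i))) :=
    fun k R x => Set.mem_iInter.1 hy ⟨k, R⟩ x
  have hE : ∀ p f g, stdE δ p (sig y f) (sig y g) → stdE δ p f g := by
    intro p f g h
    have := (h₁.1 p ![f, g]).1 ((hy' 2 (E p) ![f, g]).2 ((h₂.1 p _).2 (by simpa using h)))
    simpa using this
  have hinj : Function.Injective (sig y) := by
    intro f g h
    funext p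
    exact hE p f g (fun q _ => by rw [h]) p le_rfl
  have hsurj : Function.Surjective (sig y) := by
    intro g
    have hex : ∀ p, ∃ f, stdE δ p (sig y f) g := by
      intro p
      let s : ((q : Set.Iic p) → Fin (δ q)) → ((q : Set.Iic p) → Fin (δ q)) :=
        fun v => res _ (sig y (ext δ hδ _ v))
      have hs : Function.Injective s := by
        intro v w hvw
        have := hE p (ext δ hδ _ v) (ext δ hδ _ w) (fun q hq => congrFun hvw ⟨q, hq⟩)
        funext q
        have h := this q q.2
        rwa [ext_of_mem _ _ _ _ _ q.2, ext_of_mem _ _ _ _ _ q.2] at h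
      obtain ⟨v, hv⟩ := Finite.surjective_of_injective hs (res _ g)
      exact ⟨ext δ hδ _ v, fun q hq => congrFun hv ⟨q, hq⟩⟩
    choose f hf using hex
    refine ⟨fun p => f p p, ?_⟩
    funext p
    have : stdE δ p (fun p => f p p) (f p) := by
      intro q hq
      refine hE q (f q) (f p) ?_ q le_rfl
      intro r hr
      rw [hf q r hr, hf p r (le_trans hr hq)]
    rw [sig_stdE y p _ _ this p le_rfl, hf p p le_rfl]
  refine ⟨@Language.Equiv.mk (relLang Rs) _ _ S₁ S₂ (Equiv.ofBijective (sig y) ⟨hinj, hsurj⟩)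
    ?_ ?_⟩
  · intro n f
    exact Empty.elim f
  · intro n R x
    exact (hy' n R x).symm
end

section
/- Let (P, ≤, δ) ∈ ℙ with P infinite, let 𝔐⁺ be a tame expansion of 𝔐_P, and let T = Th(𝔐⁺). Then every model M⁺ of T with the property that any two elements of M⁺ that are E_p-equivalent for every p ∈ P are equal admits an elementary embedding into 𝔐⁺. -/
open MP FirstOrder


section Helpers

variable {P : Type u} {δ : P → ℕ}

/-- Same equality pattern, and agreement on the coordinates in `F`. -/
def TupSim {ι : Type w} (F : Set P) (z w : ι → MProd δ) : Prop :=
  (∀ i j, z i = z j ↔ w i = w j) ∧ ∀ i, ∀ q ∈ F, z i q = w i q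

theorem TupSim.symm {ι : Type w} {F : Set P} {z w : ι → MProd δ} (h : TupSim F z w) :
    TupSim F w z :=
  ⟨fun i j => (h.1 i j).symm, fun i q hq => (h.2 i q hq).symm⟩

theorem TupSim.mono {ι : Type w} {F G : Set P} (hFG : F ⊆ G) {z w : ι → MProd δ}
    (h : TupSim G z w) : TupSim F z w :=
  ⟨h.1, fun i q hq => h.2 i q (hFG hq)⟩

theorem infinite_class [Infinite P] (hδ : ∀ p, 2 ≤ δ p) {F : Set P} (hF : F.Finite)
    (x : MProd δ) : {y : MProd δ | ∀ q ∈ F, x q = y q}.Infinite := by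
  classical
  have hne : ∀ p, ∃ k : Fin (δ p), k ≠ x p := by
    intro p
    have : Nontrivial (Fin (δ p)) := Fin.nontrivial_iff_two_le.2 (hδ p)
    exact exists_ne (x p)
  choose k hk using hne
  have hinf : (Fᶜ).Infinite := hF.infinite_compl
  refine Set.infinite_of_injOn_mapsTo (f := fun p => Function.update x p (k p)) ?_ ?_ hinf
  · intro p _ q _ hpq
    by_contra hne
    have := congrFun hpq p
    simp only [Function.update_self, Function.update_of_ne hne] at this
    exact hk p this
  · intro p hp q hq
    have : q ≠ p := fun h => hp (h ▸ hq)
    simp [Function.update_of_ne this]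

theorem TupSim.extend [Infinite P] (hδ : ∀ p, 2 ≤ δ p) {F : Set P} (hF : F.Finite)
    {ι : Type w} [Finite ι] {z w : ι → MProd δ} (h : TupSim F z w) (x : MProd δ) :
    ∃ y : MProd δ, (∀ i, z i = x ↔ w i = y) ∧ ∀ q ∈ F, x q = y q := by
  by_cases hx : ∃ i, z i = x
  · obtain ⟨i, rfl⟩ := hx
    exact ⟨w i, fun j => h.1 j i, h.2 i⟩
  · obtain ⟨y, hy, hy'⟩ := (infinite_class hδ hF x).exists_notMem_finite (Set.finite_range w)
    refine ⟨y, fun i => ⟨fun e => (hx ⟨i, e⟩).elim, fun e => (hy' ⟨i, e⟩).elim⟩, hy⟩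

theorem TupSim.snoc {α : Type w} {n : ℕ} {F : Set P} {a b : α → MProd δ} {xs ys : Fin n → MProd δ}
    (h : TupSim F (Sum.elim a xs) (Sum.elim b ys)) {x y : MProd δ}
    (hxy : ∀ i, Sum.elim a xs i = x ↔ Sum.elim b ys i = y) (hF : ∀ q ∈ F, x q = y q) :
    TupSim F (Sum.elim a (Fin.snoc xs x : Fin (n + 1) → MProd δ))
      (Sum.elim b (Fin.snoc ys y : Fin (n + 1) → MProd δ)) := by
  have key : ∀ i : α ⊕ Fin (n + 1),
      (∃ j : α ⊕ Fin n,
        Sum.elim a (Fin.snoc xs x : Fin (n + 1) → MProd δ) i = Sum.elim a xs j ∧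
        Sum.elim b (Fin.snoc ys y : Fin (n + 1) → MProd δ) i = Sum.elim b ys j) ∨
      (Sum.elim a (Fin.snoc xs x : Fin (n + 1) → MProd δ) i = x ∧
        Sum.elim b (Fin.snoc ys y : Fin (n + 1) → MProd δ) i = y) := by
    rintro (i | i)
    · exact Or.inl ⟨Sum.inl i, rfl, rfl⟩
    · refine Fin.lastCases ?_ (fun j => ?_) i
      · right; simp
      · left; exact ⟨Sum.inr j, by simp, by simp⟩
  constructor
  · intro i j
    rcases key i with ⟨i', e1, e2⟩ | ⟨e1, e2⟩ <;> rcases key j with ⟨j', e3, e4⟩ | ⟨e3, e4⟩ <;>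
      rw [e1, e2, e3, e4]
    · exact h.1 _ _
    · exact hxy _
    · rw [eq_comm, hxy, eq_comm]
    · simp
  · intro i q hq
    rcases key i with ⟨i', e1, e2⟩ | ⟨e1, e2⟩ <;> rw [e1, e2]
    · exact h.2 _ q hq
    · exact hF q hq

theorem relLang_term_var {Rs : ℕ → Type v} {β : Type w} (t : (relLang Rs).Term β) :
    ∃ i, t = Language.Term.var i := by
  cases t with
  | var i => exact ⟨i, rfl⟩
  | func f _ => exact Empty.elim f

theorem realize_iff_of_tupSim [PartialOrder P] [Infinite P]
    (hdf : ∀ p : P, (Set.Iic p).Finite) (hδ : ∀ p, 2 ≤ δ p)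
    {Rs : ℕ → Type v} (E : P → Rs 2) [S : (relLang Rs).Structure (MProd δ)]
    (hS : IsTameExpansion δ E S) {α : Type w} [Finite α] {n : ℕ}
    (φ : (relLang Rs).BoundedFormula α n) :
    ∃ F : Set P, F.Finite ∧ ∀ (a b : α → MProd δ) (xs ys : Fin n → MProd δ),
      TupSim F (Sum.elim a xs) (Sum.elim b ys) → (φ.Realize a xs ↔ φ.Realize b ys) := by
  induction φ with
  | falsum => exact ⟨∅, Set.finite_empty, fun _ _ _ _ _ => Iff.rfl⟩
  | equal t₁ t₂ =>
    obtain ⟨i, rfl⟩ := relLang_term_var t₁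
    obtain ⟨j, rfl⟩ := relLang_term_var t₂
    refine ⟨∅, Set.finite_empty, fun a b xs ys h => ?_⟩
    exact h.1 i j
  | rel R ts =>
    obtain ⟨p, hp⟩ := hS.2 _ R
    refine ⟨Set.Iic p, hdf p, fun a b xs ys h => ?_⟩
    refine hp _ _ fun i q hq => ?_
    obtain ⟨j, hj⟩ := relLang_term_var (ts i)
    simp only [hj]
    exact h.2 j q hq
  | imp f g hf hg =>
    obtain ⟨F, hF, h1⟩ := hf
    obtain ⟨G, hG, h2⟩ := hg
    refine ⟨F ∪ G, hF.union hG, fun a b xs ys h => ?_⟩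
    rw [Language.BoundedFormula.realize_imp, Language.BoundedFormula.realize_imp,
      h1 a b xs ys (h.mono Set.subset_union_left), h2 a b xs ys (h.mono Set.subset_union_right)]
  | all f hf =>
    obtain ⟨F, hF, h1⟩ := hf
    refine ⟨F, hF, ?_⟩
    have main : ∀ (a b : α → MProd δ) (xs ys), TupSim F (Sum.elim a xs) (Sum.elim b ys) →
        (f.all.Realize a xs → f.all.Realize b ys) := by
      intro a b xs ys h
      rw [Language.BoundedFormula.realize_all, Language.BoundedFormula.realize_all]
      intro H y
      obtain ⟨x, hx, hx'⟩ := h.symm.extend hδ hF y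
      exact (h1 _ _ _ _ (h.symm.snoc hx hx')).2 (H x)
    exact fun a b xs ys h => ⟨main _ _ _ _ h, main _ _ _ _ h.symm⟩

theorem exists_realize {L : FirstOrder.Language.{u₁, v₁}} {M : Type u₂} {N : Type u₃} [L.Structure M]
    [L.Structure N] [Nonempty N] (hmod : M ⊨ L.completeTheory N) (φ : L.Formula M)
    (h : φ.Realize (id : M → M)) : ∃ v : M → N, φ.Realize v := by
  classical
  have h1 : M ⊨ φ.exClosure := by
    rw [Language.Formula.realize_exClosure]
    exact ⟨fun a => (a : M), (Language.BoundedFormula.realize_restrictFreeVar id (by simp)).2 h⟩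
  have h2 := (Language.realize_iff_of_model_completeTheory N M φ.exClosure).1 h1
  rw [Language.Formula.realize_exClosure] at h2
  obtain ⟨v, hv⟩ := h2
  refine ⟨fun a => if ha : a ∈ φ.freeVarFinset then v ⟨a, ha⟩ else Classical.arbitrary N, ?_⟩
  exact (Language.BoundedFormula.realize_restrictFreeVar _ (by simp)).1 hv

theorem exists_ultrafilter {L : FirstOrder.Language.{u₁, v₁}} {M : Type u₂} {N : Type u₃} [L.Structure M]
    [L.Structure N] [Nonempty N] (hmod : M ⊨ L.completeTheory N) :
    ∃ U : Ultrafilter (M → N), ∀ φ : L.Formula M, φ.Realize (id : M → M) →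
      ∀ᶠ v in (U : Filter (M → N)), φ.Realize v := by
  let B : {φ : L.Formula M // φ.Realize (id : M → M)} → Filter (M → N) :=
    fun φ => Filter.principal {v | φ.1.Realize v}
  have : Nonempty {φ : L.Formula M // φ.Realize (id : M → M)} :=
    ⟨⟨⊤, Language.Formula.realize_top.2 trivial⟩⟩
  have : (iInf B).NeBot := by
    refine Filter.iInf_neBot_of_directed' ?_ ?_
    · rintro ⟨φ, hφ⟩ ⟨ψ, hψ⟩
      refine ⟨⟨φ ⊓ ψ, Language.Formula.realize_inf.2 ⟨hφ, hψ⟩⟩, ?_, ?_⟩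
      · exact Filter.principal_mono.2 fun v hv => (Language.Formula.realize_inf.1 hv).1
      · exact Filter.principal_mono.2 fun v hv => (Language.Formula.realize_inf.1 hv).2
    · rintro ⟨φ, hφ⟩
      obtain ⟨v, hv⟩ := exists_realize hmod φ hφ
      exact Filter.principal_neBot_iff.2 ⟨v, hv⟩
  refine ⟨Ultrafilter.of (iInf B), fun φ hφ => ?_⟩
  exact Ultrafilter.of_le (iInf B) (Filter.mem_iInf_of_mem ⟨φ, hφ⟩ (Filter.mem_principal_self _))

theorem exists_rel_formula {L : FirstOrder.Language.{u₁, v₁}} {α : Type u₂} (R : L.Relations 2)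
    (a b : α) : ∃ φ : L.Formula α, ∀ (M : Type u₃) [L.Structure M] (v : α → M),
      φ.Realize v ↔ ¬ Language.Structure.RelMap R ![v a, v b] := by
  refine ⟨(R.formula ![Language.Term.var a, Language.Term.var b]).not, fun M _ v => ?_⟩
  rw [Language.Formula.realize_not, Language.Formula.realize_rel]
  have : (fun i => ((![Language.Term.var a, Language.Term.var b] :
      Fin 2 → L.Term α) i).realize v) = ![v a, v b] := by
    funext i
    fin_cases i <;> rfl
  rw [this]

end Helpers

/-- Let `𝔐⁺` be a tame expansion of `𝔐_P` with `P` infinite, and `T = Th(𝔐⁺)`.  Every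
model of `T` in which `E_p`-equivalence for all `p ∈ P` implies equality elementarily
embeds into `𝔐⁺`. -/
theorem elementary_embedding_into_tame_expansion
    {P : Type u} [PartialOrder P] [Countable P] [Infinite P]
    (hdf : ∀ p : P, (Set.Iic p).Finite)
    (δ : P → ℕ) (hδ : ∀ p, 2 ≤ δ p)
    {Rs : ℕ → Type v} (E : P → Rs 2)
    (S : (relLang Rs).Structure (MProd δ))
    (hS : IsTameExpansion δ E S)
    (Mp : Type u) [SMp : (relLang Rs).Structure Mp]
    (hmod : Mp ⊨ (@Language.completeTheory (relLang Rs) (MProd δ) S))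
    (hsep : ∀ a b : Mp,
      (∀ p : P, SMp.RelMap (E p : (relLang Rs).Relations 2) ![a, b]) → a = b) :
    Nonempty (@Language.ElementaryEmbedding (relLang Rs) Mp (MProd δ) SMp S) := by
  classical
  let _ := S
  have : Nonempty (MProd δ) := ⟨fun p => ⟨0, lt_of_lt_of_le (by norm_num) (hδ p)⟩⟩
  obtain ⟨U, hU⟩ := exists_ultrafilter hmod
  have hlim : ∀ (a : Mp) (q : P), ∃ k : Fin (δ q), ∀ᶠ v in (U : Filter (Mp → MProd δ)),
      v a q = k := by
    intro a q
    obtain ⟨k, hk⟩ := Ultrafilter.eq_pure_of_finite (U.map fun v => v a q)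
    refine ⟨k, ?_⟩
    have : ({k} : Set (Fin (δ q))) ∈ U.map fun v => v a q := by rw [hk]; exact rfl
    exact this
  choose g hg using hlim
  have hgF : ∀ (a : Mp) (F : Set P), F.Finite → ∀ᶠ v in (U : Filter (Mp → MProd δ)),
      ∀ q ∈ F, v a q = g a q := by
    intro a F hF
    exact (Filter.eventually_all_finite hF).2 fun q _ => hg a q
  have hinj : Function.Injective g := by
    intro a b hab
    apply hsep
    intro p
    by_contra hn
    obtain ⟨φ, hφ⟩ := exists_rel_formula (L := relLang Rs) (E p) a b
    obtain ⟨v, h1, h2, h3⟩ := ((hU φ ((hφ Mp id).2 hn)).and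
      ((hgF a _ (hdf p)).and (hgF b _ (hdf p)))).exists
    apply (hφ (MProd δ) v).1 h1
    refine (hS.1 p _).2 fun q hq => ?_
    exact (h2 q hq).trans ((congrFun hab q).trans (h3 q hq).symm)
  have main : ∀ (n : ℕ) (φ : (relLang Rs).Formula (Fin n)) (x : Fin n → Mp),
      φ.Realize x → φ.Realize (g ∘ x) := by
    intro n φ x hx
    obtain ⟨F, hF, h⟩ := realize_iff_of_tupSim hdf hδ E hS φ
    have e1 : ∀ᶠ v in (U : Filter (Mp → MProd δ)), φ.Realize (v ∘ x) := by
      have := hU (φ.relabel x) (by rw [Language.Formula.realize_relabel]; exact hx)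
      simpa only [Language.Formula.realize_relabel] using this
    have e2 : ∀ᶠ v in (U : Filter (Mp → MProd δ)), ∀ i, ∀ q ∈ F, v (x i) q = g (x i) q :=
      Filter.eventually_all.2 fun i => hgF (x i) F hF
    have e3 : ∀ᶠ v in (U : Filter (Mp → MProd δ)), ∀ i j, v (x i) = v (x j) → x i = x j := by
      refine Filter.eventually_all.2 fun i => Filter.eventually_all.2 fun j => ?_
      by_cases hij : x i = x j
      · exact Filter.Eventually.of_forall fun _ _ => hij
      · have := hU (Language.Term.equal (Language.Term.var (x i))
          (Language.Term.var (x j))).not (by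
            rw [Language.Formula.realize_not, Language.Formula.realize_equal]; exact hij)
        filter_upwards [this] with v hv he
        rw [Language.Formula.realize_not, Language.Formula.realize_equal] at hv
        exact (hv he).elim
    obtain ⟨v, h1, h2, h3⟩ := (e1.and (e2.and e3)).exists
    refine (h (v ∘ x) (g ∘ x) default default ⟨?_, ?_⟩).1 h1
    · rintro (i | i) (j | j)
      · exact ⟨fun e => congrArg g (h3 i j e), fun e => congrArg v (hinj e)⟩
      · exact j.elim0
      · exact i.elim0
      · exact i.elim0
    · rintro (i | i)
      · exact h2 i
      · exact i.elim0
  refine ⟨⟨g, fun n φ x => ⟨fun h => ?_, main n φ x⟩⟩⟩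
  by_contra hn
  have := main n φ.not x (Language.Formula.realize_not.2 hn)
  exact Language.Formula.realize_not.1 this h
end

section
/- Let C be a nonzero cyclic group, let I_* be an infinite index set, set C_i = C for every i ∈ I_*, and let α_* < (2^{ℵ₀})⁺ be an ordinal. Then there exists a C̄-system A = (A_I : I ∈ 𝐈) with rnk(A) > α_*. -/
universe u

namespace CSys

variable {ι : Type u} (C : ι → Type u) [∀ i, AddCommGroup (C i)]

/-- A `C̄`-system: a collection `idx` of subsets of the index set, directed under inclusion,
together with a subgroup `grp I ≤ ∏_{i ∈ I} C i` for each `I`, closed under the restriction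
maps. -/
structure CSystem where
  idx : Set (Set ι)
  directed : ∀ I ∈ idx, ∀ J ∈ idx, ∃ K ∈ idx, I ⊆ K ∧ J ⊆ K
  grp : (I : Set ι) → AddSubgroup ((i : I) → C (i : ι))
  restrict_mem : ∀ I ∈ idx, ∀ J ∈ idx, ∀ (h : I ⊆ J), ∀ a ∈ grp J,
    (fun i : I => a ⟨(i : ι), h i.2⟩) ∈ grp I

variable {C}

/-- `rankGE S α I a` says that the rank of `a ∈ A_I` in the inverse system `S` is `≥ α`:
for every `β < α` and every `J ⊇ I` in the system there is `b ∈ A_J` restricting to `a`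
with rank `≥ β`. -/
def rankGE (S : CSystem C) : Ordinal.{u} → (I : Set ι) → ((i : I) → C (i : ι)) → Prop
  | α, I, a => ∀ β : Ordinal.{u}, β < α → ∀ J ∈ S.idx, ∀ (h : I ⊆ J),
      ∃ b ∈ S.grp J, (fun i : I => b ⟨(i : ι), h i.2⟩) = a ∧ rankGE S β J b
  termination_by α => α

/-- `rnk(A)`: the least ordinal `α` such that every element of the system of rank `< ∞`
has rank `< α`. -/
noncomputable def sysRank (S : CSystem C) : Ordinal.{u} :=
  sInf {α : Ordinal.{u} | ∀ I ∈ S.idx, ∀ a ∈ S.grp I,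
    (¬ ∀ β : Ordinal.{u}, rankGE S β I a) → ¬ rankGE S α I a}

end CSys

namespace CSysProof

open CSys

section general

variable {ι : Type u} {C : ι → Type u} [∀ i, AddCommGroup (C i)]

theorem rankGE_iff (S : CSystem C) (α : Ordinal.{u}) (I : Set ι) (a : (i : I) → C (i : ι)) :
    rankGE S α I a ↔ ∀ β : Ordinal.{u}, β < α → ∀ J ∈ S.idx, ∀ (h : I ⊆ J),
      ∃ b ∈ S.grp J, (fun i : I => b ⟨(i : ι), h i.2⟩) = a ∧ rankGE S β J b := by
  rw [rankGE]

theorem rankGE_anti (S : CSystem C) {α β : Ordinal.{u}} (hab : β ≤ α) (I : Set ι)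
    (a : (i : I) → C (i : ι)) (h : rankGE S α I a) : rankGE S β I a := by
  rw [rankGE_iff] at h ⊢
  exact fun γ hγ => h γ (hγ.trans_le hab)

/-- An element of rank infinity has extensions of rank infinity. -/
theorem exists_ext_top (S : CSystem C) (I : Set ι) (a : (i : I) → C (i : ι))
    (ha : ∀ β : Ordinal.{u}, rankGE S β I a) (J : Set ι) (hJ : J ∈ S.idx) (h : I ⊆ J) :
    ∃ b ∈ S.grp J, (fun i : I => b ⟨(i : ι), h i.2⟩) = a ∧ ∀ β : Ordinal.{u}, rankGE S β J b := by
  classical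
  have key : ∀ b : (i : J) → C (i : ι), ∃ β : Ordinal.{u},
      rankGE S β J b → ∀ γ : Ordinal.{u}, rankGE S γ J b := by
    intro b
    by_cases hb : ∀ γ : Ordinal.{u}, rankGE S γ J b
    · exact ⟨0, fun _ => hb⟩
    · push Not at hb
      obtain ⟨β, hβ⟩ := hb
      exact ⟨β, fun h' => absurd h' hβ⟩
  choose f hf using key
  have h1 := ha (Order.succ (⨆ b, f b))
  rw [rankGE_iff] at h1
  obtain ⟨b, hb, hba, hr⟩ := h1 _ (Order.lt_succ _) J hJ h
  exact ⟨b, hb, hba, hf b (rankGE_anti S (Ordinal.le_iSup f b) J b hr)⟩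

theorem lt_sysRank (S : CSystem C) (α : Ordinal.{u}) (I : Set ι) (hI : I ∈ S.idx)
    (a : (i : I) → C (i : ι)) (ha : a ∈ S.grp I) (h1 : rankGE S α I a)
    (h2 : ¬ ∀ β : Ordinal.{u}, rankGE S β I a) : α < sysRank S := by
  classical
  have hne : {α : Ordinal.{u} | ∀ I ∈ S.idx, ∀ a ∈ S.grp I,
    (¬ ∀ β : Ordinal.{u}, rankGE S β I a) → ¬ rankGE S α I a}.Nonempty := by
    have key : ∀ p : (Σ I : Set ι, ((i : I) → C (i : ι))), ∃ β : Ordinal.{u},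
        rankGE S β p.1 p.2 → ∀ γ : Ordinal.{u}, rankGE S γ p.1 p.2 := by
      intro p
      by_cases hb : ∀ γ : Ordinal.{u}, rankGE S γ p.1 p.2
      · exact ⟨0, fun _ => hb⟩
      · push Not at hb
        obtain ⟨β, hβ⟩ := hb
        exact ⟨β, fun h' => absurd h' hβ⟩
    choose f hf using key
    refine ⟨⨆ b, f b, ?_⟩
    intro I _ a _ hn hr
    exact hn (hf ⟨I, a⟩ (rankGE_anti S (Ordinal.le_iSup f ⟨I, a⟩) I a hr))
  have hm := csInf_mem hne
  by_contra hlt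
  exact hm I hI a ha h2 (rankGE_anti S (not_lt.mp hlt) I a h1)

end general

/-- Codes of finite partial information. -/
abbrev Code := Finset ℕ × Finset ℕ

/-- `x` agrees with `q.2` on the finite set `q.1`. -/
def agrees {X : Type*} (e : X → Set ℕ) (q : Code) (x : X) : Prop :=
  ∀ d ∈ q.1, d ∈ e x ↔ d ∈ q.2

theorem exists_isolating {X : Type*} (e : X → Set ℕ) (he : Function.Injective e)
    (F : Finset X) (x : X) :
    ∃ q : Code, agrees e q x ∧ ∀ y ∈ F, agrees e q y → y = x := by
  classical
  have key : ∀ y : X, ∃ d : ℕ, (d ∈ e y ↔ d ∈ e x) → y = x := by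
    intro y
    by_cases hy : y = x
    · exact ⟨0, fun _ => hy⟩
    · by_contra hcon
      push Not at hcon
      exact hy (he (Set.ext fun d => (hcon d).1))
  choose f hf using key
  refine ⟨(F.image f, (F.image f).filter (· ∈ e x)), ?_, ?_⟩
  · intro d hd
    simp only [Finset.mem_filter]
    exact ⟨fun h => ⟨hd, h⟩, fun h => h.2⟩
  · intro y hy h
    apply hf
    have hd : f y ∈ F.image f := Finset.mem_image_of_mem f hy
    rw [h (f y) hd]
    simp only [Finset.mem_filter]
    exact ⟨fun h => h.2, fun h => ⟨hd, h⟩⟩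

section construction

variable {ι : Type u} {C : Type u} [AddCommGroup C] {B : Type*} [LinearOrder B]

/-- The well-founded relation on labels. -/
def lt' (p q : B × ℕ) : Prop := Prod.Lex (· < ·) (· < ·) p q

/-- Truncation of a sequence at `n`. -/
def trunc {W : Type*} (n : ℕ) (x : ℕ → W) : ℕ → W := fun k => x (min k n)

theorem trunc_trunc {W : Type*} {k n : ℕ} (h : k ≤ n) (x : ℕ → W) :
    trunc k (trunc n x) = trunc k x := by
  funext j
  simp only [trunc]
  congr 1
  omega

/-- Level `n` of the tree. -/
def level (B : Type*) [LinearOrder B] (n : ℕ) : Set (ℕ → B × ℕ) :=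
  {x | (∀ k < n, lt' (x (k + 1)) (x k)) ∧ ∀ k, n ≤ k → x k = x n}

theorem trunc_self {n : ℕ} {x : ℕ → B × ℕ} (hx : x ∈ level B n) : trunc n x = x := by
  funext k
  simp only [trunc]
  rcases le_total k n with h | h
  · rw [min_eq_left h]
  · rw [min_eq_right h, hx.2 k h]

theorem trunc_mem {n m : ℕ} (h : n ≤ m) {x : ℕ → B × ℕ} (hx : x ∈ level B m) :
    trunc n x ∈ level B n := by
  constructor
  · intro k hk
    simp only [trunc]
    rw [min_eq_left (by omega), min_eq_left (by omega)]
    exact hx.1 k (by omega)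
  · intro k hk
    simp only [trunc]
    congr 1
    omega

open Classical in
/-- The coordinate functional at `(k, q)`. -/
noncomputable def ev {X : Type*} (P : X → Prop) : (X →₀ C) →+ C :=
  Finsupp.liftAddHom fun x => if P x then AddMonoidHom.id C else 0

open Classical in
theorem ev_apply {X : Type*} (P : X → Prop) (g : X →₀ C) :
    ev P g = ∑ x ∈ g.support, if P x then g x else 0 := by
  simp only [ev, Finsupp.liftAddHom_apply, Finsupp.sum]
  refine Finset.sum_congr rfl fun x _ => ?_
  split_ifs <;> simp

open Classical in
theorem ev_single {X : Type*} (P : X → Prop) (x : X) (c : C) :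
    ev P (Finsupp.single x c) = if P x then c else 0 := by
  simp only [ev, Finsupp.liftAddHom_apply_single]
  split_ifs <;> simp

theorem ev_mapDomain {X : Type*} (P : X → Prop) (f : X → X) (g : X →₀ C) :
    ev P (Finsupp.mapDomain f g) = ev (fun x => P (f x)) g := by
  classical
  induction g using Finsupp.induction_linear with
  | zero => simp
  | add g h hg hh => rw [Finsupp.mapDomain_add, map_add, map_add, hg, hh]
  | single x c => rw [Finsupp.mapDomain_single, ev_single, ev_single]

variable (dec : ι → ℕ × Code) (e : (ℕ → B × ℕ) → Set ℕ)

/-- The functional of coordinate `i`. -/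
noncomputable def coord (i : ι) : ((ℕ → B × ℕ) →₀ C) →+ C :=
  ev fun x => agrees e (dec i).2 (trunc (dec i).1 x)

/-- All coordinates in `I`. -/
noncomputable def coords (I : Set ι) : ((ℕ → B × ℕ) →₀ C) →+ (I → C) :=
  AddMonoidHom.mk' (fun g i => coord dec e (i : ι) g)
    (fun g h => by funext i; simp)

/-- The index sets. -/
def idxSet (n : ℕ) : Set ι := {i | (dec i).1 ≤ n}

theorem idxSet_subset (hdec : Function.Surjective dec) {n m : ℕ} :
    idxSet dec n ⊆ idxSet dec m ↔ n ≤ m := by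
  constructor
  · intro h
    obtain ⟨i, hi⟩ := hdec (n, (∅, ∅))
    have : i ∈ idxSet dec n := by simp [idxSet, hi]
    have := h this
    simpa [idxSet, hi] using this
  · intro h i hi
    exact le_trans (show (dec i).1 ≤ n from hi) h

/-- Finitely supported functions on a set, as a subgroup. -/
def supp (C : Type u) [AddCommGroup C] {X : Type*} (T : Set X) : AddSubgroup (X →₀ C) where
  carrier := {g | ∀ x, x ∉ T → g x = 0}
  zero_mem' := by intro x _; rfl
  add_mem' := by
    intro a b ha hb x hx
    rw [Finsupp.add_apply, ha x hx, hb x hx, add_zero]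
  neg_mem' := by
    intro a ha x hx
    rw [Finsupp.neg_apply, ha x hx, neg_zero]

theorem mem_supp {X : Type*} {T : Set X} {g : X →₀ C} :
    g ∈ supp C T ↔ ∀ x, x ∉ T → g x = 0 := Iff.rfl

/-- The group at `I`. -/
noncomputable def grpAt (C : Type u) [AddCommGroup C] (I : Set ι) : AddSubgroup (I → C) :=
  (supp C {x | ∀ n, I = idxSet dec n → x ∈ level B n}).map (coords dec e I)

theorem mem_grpAt (hdec : Function.Surjective dec) (n : ℕ) (a : idxSet dec n → C) :
    a ∈ grpAt dec e C (idxSet dec n) ↔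
      ∃ g ∈ supp C (level B n), coords dec e (idxSet dec n) g = a := by
  have : {x | ∀ m, idxSet dec n = idxSet dec m → x ∈ level B m} = level B n := by
    ext x
    constructor
    · intro h; exact h n rfl
    · intro h m hm
      have h1 := (idxSet_subset dec hdec).1 hm.le
      have h2 := (idxSet_subset dec hdec).1 hm.ge
      rwa [← le_antisymm h1 h2]
  rw [grpAt, this, AddSubgroup.mem_map]

/-- The system. -/
noncomputable def sys (C : Type u) [AddCommGroup C] (hdec : Function.Surjective dec) :
    CSystem (fun _ : ι => C) where
  idx := Set.range (idxSet dec)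
  directed := by
    rintro _ ⟨n, rfl⟩ _ ⟨m, rfl⟩
    exact ⟨_, ⟨max n m, rfl⟩, (idxSet_subset dec hdec).2 (le_max_left _ _),
      (idxSet_subset dec hdec).2 (le_max_right _ _)⟩
  grp := fun I => grpAt dec e C I
  restrict_mem := by
    rintro _ ⟨n, rfl⟩ _ ⟨m, rfl⟩ h a ha
    have hnm := (idxSet_subset dec hdec).1 h
    rw [mem_grpAt dec e hdec] at ha ⊢
    obtain ⟨g, hg, rfl⟩ := ha
    refine ⟨Finsupp.mapDomain (trunc n) g, ?_, ?_⟩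
    · intro x hx
      apply Finsupp.mapDomain_of_not_mem_image_support
      rintro ⟨y, hy, rfl⟩
      apply hx
      apply trunc_mem hnm
      by_contra hy'
      exact (Finsupp.mem_support_iff.1 hy) (hg y hy')
    · funext i
      change ev _ _ = ev _ _
      rw [ev_mapDomain]
      congr 2
      funext x
      rw [trunc_trunc i.2]

theorem rank_ge (hdec : Function.Surjective dec) (o : B → Ordinal.{u})
    (ho : ∀ b γ, γ < o b → ∃ b' < b, o b' = γ)
    (c : C) (β : Ordinal.{u}) : ∀ (n : ℕ) (x : ℕ → B × ℕ), x ∈ level B n → β ≤ o (x n).1 →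
      rankGE (sys dec e C hdec) β (idxSet dec n)
        (coords dec e (idxSet dec n) (Finsupp.single x c)) := by
  classical
  have hsingle : ∀ (n : ℕ) (x : ℕ → B × ℕ), x ∈ level B n →
      coords dec e (idxSet dec n) (Finsupp.single x c) ∈ (sys dec e C hdec).grp (idxSet dec n) := by
    intro n x hx
    refine (mem_grpAt dec e hdec n _).2 ⟨_, ?_, rfl⟩
    intro y hy
    apply Finsupp.single_eq_of_ne
    rintro rfl
    exact hy hx
  induction β using WellFoundedLT.induction with
  | _ β ih =>
  intro n x hx hβ
  rw [rankGE_iff]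
  rintro γ hγ _ ⟨m, rfl⟩ h
  have hnm := (idxSet_subset dec hdec).1 h
  rcases hnm.eq_or_lt with rfl | hlt
  · exact ⟨_, hsingle n x hx, rfl, ih γ hγ n x hx (hγ.le.trans hβ)⟩
  · obtain ⟨b', hb', hob⟩ := ho (x n).1 γ (hγ.trans_le hβ)
    let y : ℕ → B × ℕ := fun k => if k ≤ n then x k else (b', m - k)
    have hy : y ∈ level B m := by
      constructor
      · intro k hk
        simp only [y]
        rcases lt_trichotomy k n with h1 | h1 | h1
        · rw [if_pos (by omega), if_pos (by omega)]
          exact hx.1 k h1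
        · subst h1
          rw [if_neg (by omega), if_pos le_rfl]
          exact Prod.Lex.left _ _ hb'
        · rw [if_neg (by omega), if_neg (by omega)]
          exact Prod.Lex.right _ (by omega)
      · intro k hk
        simp only [y]
        rw [if_neg (by omega), if_neg (by omega)]
        congr 1
        omega
    refine ⟨_, hsingle m y hy, ?_, ih γ hγ m y hy ?_⟩
    · funext i
      change ev _ _ = ev _ _
      rw [ev_single, ev_single]
      have hi : (dec i).1 ≤ n := i.2
      have : trunc (dec i).1 y = trunc (dec i).1 x := by
        funext k
        simp only [trunc, y]
        rw [if_pos (by omega)]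
      simp only [this]
    · simp only [y]
      rw [if_neg (by omega), hob]

theorem not_top [WellFoundedLT B] (hdec : Function.Surjective dec) (he : Function.Injective e)
    (w : B × ℕ) : ∀ (n : ℕ) (g : (ℕ → B × ℕ) →₀ C), g ∈ supp C (level B n) →
      ∀ x, g x ≠ 0 → x n = w →
      ¬ ∀ β, rankGE (sys dec e C hdec) β (idxSet dec n) (coords dec e (idxSet dec n) g) := by
  classical
  have wf : WellFounded (lt' (B := B)) :=
    WellFounded.prod_lex (wellFounded_lt (α := B)) (wellFounded_lt (α := ℕ))
  induction w using wf.induction with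
  | _ w ih =>
  intro n g hg x hx hxw htop
  obtain ⟨b, hb, hbg, hbtop⟩ := exists_ext_top _ _ _ htop (idxSet dec (n + 1)) ⟨n + 1, rfl⟩
    ((idxSet_subset dec hdec).2 (Nat.le_succ n))
  obtain ⟨g', hg', rfl⟩ := (mem_grpAt dec e hdec (n + 1) b).1 hb
  have hlev : ∀ {k : ℕ} {f : (ℕ → B × ℕ) →₀ C}, f ∈ supp C (level B k) →
      ∀ y, f y ≠ 0 → y ∈ level B k := by
    intro k f hf y hy
    by_contra hcon
    exact hy (hf y hcon)
  obtain ⟨q, hqx, hq⟩ := exists_isolating e he (g.support ∪ g'.support.image (trunc n)) x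
  obtain ⟨i, hi⟩ := hdec (n, q)
  have hin : i ∈ idxSet dec n := by simp [idxSet, hi]
  have heq : coord dec e i g' = coord dec e i g := congrFun hbg ⟨i, hin⟩
  have h1 : coord dec e i g = g x := by
    rw [coord, ev_apply, Finset.sum_eq_single x]
    · rw [if_pos]
      rw [hi, trunc_self (hlev hg x hx)]
      exact hqx
    · intro y hy hyx
      rw [if_neg]
      rw [hi, trunc_self (hlev hg y (Finsupp.mem_support_iff.1 hy))]
      intro hcon
      exact hyx (hq y (Finset.mem_union_left _ hy) hcon)
    · intro hcon
      exact absurd (Finsupp.mem_support_iff.2 hx) hcon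
  have h2 : coord dec e i g' ≠ 0 := by rw [heq, h1]; exact hx
  rw [coord, ev_apply] at h2
  obtain ⟨x', hx', hne⟩ := Finset.exists_ne_zero_of_sum_ne_zero h2
  have hag : agrees e (dec i).2 (trunc (dec i).1 x') := by
    by_contra hcon
    exact hne (if_neg hcon)
  rw [hi] at hag
  have htr : trunc n x' = x :=
    hq _ (Finset.mem_union_right _ (Finset.mem_image_of_mem _ hx')) hag
  have hx'0 := Finsupp.mem_support_iff.1 hx'
  have hl := hlev hg' x' hx'0
  have hlt : lt' (x' (n + 1)) w := by
    have h3 := hl.1 n (Nat.lt_succ_self n)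
    have h4 : x' n = w := by
      rw [← hxw, ← htr]
      simp [trunc]
    rwa [h4] at h3
  exact ih _ hlt (n + 1) g' hg' x' hx'0 rfl hbtop

end construction

theorem exists_dec (ι : Type u) [Infinite ι] : ∃ dec : ι → ℕ × Code, Function.Surjective dec := by
  obtain ⟨f, hf⟩ := exists_surjective_nat (ℕ × Code)
  exact ⟨f ∘ Function.invFun (Infinite.natEmbedding ι),
    hf.comp (Function.invFun_surjective (Infinite.natEmbedding ι).injective)⟩

theorem exists_code (α : Ordinal.{u})
    (hα : α < (Order.succ (2 ^ Cardinal.aleph0 : Cardinal.{u})).ord) :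
    ∃ e : (ℕ → Set.Iic α × ℕ) → Set ℕ, Function.Injective e := by
  have h1 : α.card ≤ 2 ^ Cardinal.aleph0 := by
    rw [Cardinal.lt_ord] at hα
    exact Order.lt_succ_iff.1 hα
  have h2 : Cardinal.mk (Set.Iic α) ≤ Cardinal.continuum := by
    rw [← Order.Iio_succ, Cardinal.mk_Iio_ordinal, ← Cardinal.lift_continuum.{u+1, u},
      Cardinal.lift_le, Order.succ_eq_add_one, Ordinal.card_add_one]
    exact Cardinal.add_le_of_le Cardinal.aleph0_le_continuum h1 (by simpa using (Cardinal.nat_lt_continuum 1).le)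
  have h3 : Cardinal.mk (ℕ → Set.Iic α × ℕ) ≤ Cardinal.continuum := by
    have h5 : Cardinal.mk (Set.Iic α × ℕ) ≤ Cardinal.continuum := by
      rw [Cardinal.mk_prod]
      simp only [Cardinal.lift_uzero, Cardinal.mk_nat, Cardinal.lift_aleph0]
      calc _ ≤ Cardinal.continuum * Cardinal.continuum :=
            mul_le_mul' h2 Cardinal.aleph0_le_continuum
        _ = Cardinal.continuum := Cardinal.continuum_mul_self
    rw [Cardinal.mk_arrow]
    simp only [Cardinal.lift_uzero, Cardinal.mk_nat, Cardinal.lift_aleph0]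
    calc _ ≤ Cardinal.continuum ^ Cardinal.aleph0 := Cardinal.power_le_power_right h5
      _ = Cardinal.continuum := Cardinal.continuum_power_aleph0
  have h4 : Cardinal.lift.{0} (Cardinal.mk (ℕ → Set.Iic α × ℕ)) ≤
      Cardinal.lift.{u+1} (Cardinal.mk (Set ℕ)) := by
    simpa using h3
  obtain ⟨f⟩ := Cardinal.lift_mk_le'.1 h4
  exact ⟨f, f.injective⟩

end CSysProof


open CSys

/-- For any nonzero cyclic group `C`, any infinite index set, and any ordinal
`α* < (2^ℵ₀)⁺`, there is a `C̄`-system (with all `Cᵢ = C`) of rank `> α*`. -/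
theorem exists_cyclic_system_of_large_rank {ι : Type u} [Infinite ι]
    (C : Type u) [AddCommGroup C] [IsAddCyclic C] [Nontrivial C]
    (α : Ordinal.{u}) (hα : α < (Order.succ (2 ^ Cardinal.aleph0 : Cardinal.{u})).ord) :
    ∃ S : CSystem (fun _ : ι => C), α < sysRank S := by
  obtain ⟨dec, hdec⟩ := CSysProof.exists_dec ι
  obtain ⟨e, he⟩ := CSysProof.exists_code α hα
  obtain ⟨c, hc⟩ := exists_ne (0 : C)
  let x : ℕ → Set.Iic α × ℕ := fun _ => (⟨α, Set.mem_Iic.2 le_rfl⟩, 0)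
  have hx : x ∈ CSysProof.level (Set.Iic α) 0 :=
    ⟨fun k hk => absurd hk (Nat.not_lt_zero k), fun _ _ => rfl⟩
  have hs : Finsupp.single x c ∈ CSysProof.supp C (CSysProof.level (Set.Iic α) 0) := by
    classical
    intro y hy
    apply Finsupp.single_eq_of_ne
    rintro rfl
    exact hy hx
  refine ⟨CSysProof.sys dec e C hdec, CSysProof.lt_sysRank _ α (CSysProof.idxSet dec 0) ⟨0, rfl⟩
    (CSysProof.coords dec e (CSysProof.idxSet dec 0) (Finsupp.single x c)) ?_ ?_ ?_⟩
  · exact (CSysProof.mem_grpAt dec e hdec 0 _).2 ⟨_, hs, rfl⟩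
  · refine CSysProof.rank_ge dec e hdec (fun b => b.1) ?_ c α 0 x hx le_rfl
    intro b γ hγ
    exact ⟨⟨γ, hγ.le.trans b.2⟩, hγ, rfl⟩
  · refine CSysProof.not_top dec e hdec he _ 0 _ hs x ?_ rfl
    rwa [Finsupp.single_eq_same]
end

section
/- Let I_* be a countably infinite index set, let C_i be a nonzero abelian group for each i ∈ I_*, and let α_* < (2^{ℵ₀})⁺ be an ordinal. Then there exists a C̄-system A = (A_I : I ∈ 𝐈) with rnk(A) > α_*. -/
universe u

namespace CSys

open Ordinal

theorem rankGE_anti {ι : Type u} {C : ι → Type u} [∀ i, AddCommGroup (C i)] (S : CSystem C)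
    {α β : Ordinal.{u}} (h : β ≤ α) (I : Set ι) (a : (i : I) → C (i : ι))
    (ha : rankGE S α I a) : rankGE S β I a := by
  rw [rankGE] at ha ⊢
  intro γ hγ J hJ hIJ
  exact ha γ (hγ.trans_le h) J hJ hIJ

theorem lt_sysRank {ι : Type u} {C : ι → Type u} [∀ i, AddCommGroup (C i)] (S : CSystem C)
    {α δ : Ordinal.{u}} (I : Set ι) (hI : I ∈ S.idx) (a : (i : I) → C (i : ι)) (haI : a ∈ S.grp I)
    (ha : rankGE S α I a) (hn : ¬ rankGE S δ I a) : α < sysRank S := by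
  classical
  have hne : {α : Ordinal.{u} | ∀ I ∈ S.idx, ∀ a ∈ S.grp I,
    (¬ ∀ β : Ordinal.{u}, rankGE S β I a) → ¬ rankGE S α I a}.Nonempty := by
    let F : (Σ I : Set ι, ((i : I) → C (i : ι))) → Ordinal.{u} := fun p =>
      if h : ∃ β, ¬ rankGE S β p.1 p.2 then h.choose else 0
    refine ⟨⨆ p, F p, ?_⟩
    intro J _ b _ hb hr
    have hb' : ∃ β, ¬ rankGE S β J b := by simpa using hb
    have hF : F ⟨J, b⟩ = hb'.choose := dif_pos hb'
    have hle : F ⟨J, b⟩ ≤ ⨆ p, F p := Ordinal.le_iSup F _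
    rw [hF] at hle
    exact hb'.choose_spec (rankGE_anti S hle J b hr)
  have hmem := csInf_mem hne
  by_contra hlt
  rw [not_lt] at hlt
  exact hmem I hI a haI (fun h => hn (h δ)) (rankGE_anti S hlt I a ha)

theorem exists_emb {ι : Type u} [Countable ι] [Infinite ι] (C : ι → Type u)
    [∀ i, AddCommGroup (C i)] (c : ∀ i, C i) (hc : ∀ i, c i ≠ 0) :
    ∃ (f : ℕ × List Bool → ι) (N : Ideal ℤ), Function.Injective f ∧ (1 : ℤ) ∉ N ∧
      ∀ z : ℤ, {p | z • c (f p) = 0}.Infinite → z ∈ N := by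
  let Fam : Set (Ideal ℤ) := {N | ∃ Y : Set ι, Y.Infinite ∧ ∀ z ∈ N, ∀ i ∈ Y, z • c i = 0}
  have hFam : Fam.Nonempty := by
    refine ⟨⊥, Set.univ, Set.infinite_univ, ?_⟩
    intro z hz i _
    rw [Ideal.mem_bot] at hz
    simp [hz]
  obtain ⟨N, ⟨Y, hY, hN⟩, hmax⟩ := WellFounded.has_min
    (wellFounded_gt : WellFounded ((· > ·) : Ideal ℤ → Ideal ℤ → Prop)) Fam hFam
  have : Infinite Y := hY.to_subtype
  obtain ⟨e⟩ : Nonempty (ℕ × List Bool ≃ Y) := nonempty_equiv_of_countable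
  refine ⟨fun p => (e p : ι), N, Subtype.val_injective.comp e.injective, ?_, ?_⟩
  · intro h1
    obtain ⟨i, hi⟩ := hY.nonempty
    exact hc i (by simpa using hN 1 h1 i hi)
  · intro z hz
    have hin : N ⊔ Ideal.span {z} ∈ Fam := by
      refine ⟨(fun p => (e p : ι)) '' {p | z • c (e p : ι) = 0},
        hz.image (Subtype.val_injective.comp e.injective).injOn, ?_⟩
      rintro w hw _ ⟨p, hp, rfl⟩
      obtain ⟨x, hx, y, hy, rfl⟩ := Submodule.mem_sup.1 hw
      obtain ⟨q, rfl⟩ := Ideal.mem_span_singleton'.1 hy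
      have hp' : z • c (e p : ι) = 0 := hp
      simp [add_smul, mul_smul, hp', hN x hx _ (e p).2]
    have hnot := hmax _ hin
    have hle : N ⊔ Ideal.span {z} ≤ N := by
      by_contra hcon
      exact hnot (lt_of_le_not_ge le_sup_left hcon)
    exact hle (le_sup_right (a := N) (Ideal.mem_span_singleton_self z))

def Valid (δ : Ordinal.{u}) : List Ordinal.{u} → Prop
  | [] => True
  | x :: l => x < l.headD δ ∧ Valid δ l

theorem Valid.bound {δ : Ordinal.{u}} : ∀ {l : List Ordinal.{u}}, Valid δ l →
    l.headD δ ≤ δ ∧ ∀ x ∈ l, x < δ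
  | [], _ => by simp
  | x :: l, h => by
    have := Valid.bound h.2
    have hx := h.1.trans_le this.1
    refine ⟨hx.le, ?_⟩
    intro y hy
    rcases List.mem_cons.1 hy with rfl | hy
    · exact hx
    · exact this.2 y hy

theorem Valid.drop {δ : Ordinal.{u}} : ∀ (j : ℕ) {l : List Ordinal.{u}}, Valid δ l →
    Valid δ (l.drop j)
  | 0, _, h => by simpa using h
  | _ + 1, [], _ => by simp [Valid]
  | j + 1, _ :: _, h => by simpa using Valid.drop j h.2

theorem Valid.ext {δ : Ordinal.{u}} (γ : Ordinal.{u}) : ∀ (j : ℕ) (l : List Ordinal.{u}),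
    Valid δ l → γ + j ≤ l.headD δ → ∃ l', Valid δ l' ∧ l'.length = l.length + j ∧
      l'.drop j = l ∧ γ ≤ l'.headD δ
  | 0, l, h, hl => ⟨l, h, by simp, by simp, by simpa using hl⟩
  | j + 1, l, h, hl => by
    have hlt : γ + (j : Ordinal.{u}) < l.headD δ := by
      refine lt_of_lt_of_le ?_ hl
      exact (add_lt_add_iff_left γ).2 (by exact_mod_cast Nat.lt_succ_self j)
    obtain ⟨l', h1, h2, h3, h4⟩ := Valid.ext γ j ((γ + (j : Ordinal.{u})) :: l) ⟨hlt, h⟩ (by simp)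
    refine ⟨l', h1, by simp [h2]; omega, ?_, h4⟩
    rw [← List.drop_drop, h3]
    simp

theorem map_attachWith_val {X : Type*} (l : List X) (P : X → Prop) (h : ∀ x ∈ l, P x) :
    (l.attachWith P h).map Subtype.val = l := by
  simp

theorem exists_code (δ : Ordinal.{u}) (hδ : δ.card ≤ 2 ^ Cardinal.aleph0) :
    ∃ g : List Ordinal.{u} → (ℕ → Bool), ∀ l l', Valid δ l → Valid δ l' → g l = g l' → l = l' := by
  classical
  have h1 : Cardinal.mk (Set.Iio δ) ≤ 2 ^ Cardinal.aleph0 := by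
    rw [Cardinal.mk_Iio_ordinal]
    simpa using Cardinal.lift_le.{u+1}.2 hδ
  have h2 : Cardinal.mk (List (Set.Iio δ)) ≤ 2 ^ Cardinal.aleph0 := by
    refine (Cardinal.mk_list_le_max _).trans (max_le ?_ h1)
    exact (Cardinal.cantor _).le
  have h3 : Cardinal.mk (List (Set.Iio δ)) ≤ Cardinal.lift.{u+1} (Cardinal.mk (ℕ → Bool)) := by
    simpa using h2
  have h4 : Cardinal.lift.{0} (Cardinal.mk (List (Set.Iio δ)))
      ≤ Cardinal.lift.{u+1} (Cardinal.mk (ℕ → Bool)) := by simpa using h2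
  obtain ⟨e⟩ := Cardinal.lift_mk_le'.1 h4
  refine ⟨fun l => if h : ∀ x ∈ l, x < δ then e (l.attachWith _ h) else fun _ => true, ?_⟩
  intro l l' hl hl' heq
  have hb := hl.bound.2
  have hb' := hl'.bound.2
  simp only [dif_pos hb, dif_pos hb'] at heq
  have := congrArg (List.map Subtype.val) (e.injective heq)
  exact (map_attachWith_val l _ hb).symm.trans (this.trans (map_attachWith_val l' _ hb'))

section construction

variable {ι : Type u} {C : ι → Type u} [∀ i, AddCommGroup (C i)]

open Classical in
/-- The generator attached to the node `l` at level `n`. -/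
noncomputable def gen (c : ∀ i, C i) (r : ι → ℕ × List Bool) (g : List Ordinal.{u} → (ℕ → Bool))
    (n : ℕ) (l : List Ordinal.{u}) (i : ι) : C i :=
  if (r i).2 = (List.range (r i).2.length).map (g (l.drop (n - (r i).1))) then c i else 0

noncomputable def phi (c : ∀ i, C i) (r : ι → ℕ × List Bool) (g : List Ordinal.{u} → (ℕ → Bool))
    (n : ℕ) : (List Ordinal.{u} →₀ ℤ) →ₗ[ℤ] (∀ i, C i) :=
  Finsupp.linearCombination ℤ (gen c r g n)

def lvl (f : ℕ × List Bool → ι) (n : ℕ) : Set ι := {i | ∃ k ≤ n, ∃ s, i = f (k, s)}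

theorem lvl_le (f : ℕ × List Bool → ι) (hf : Function.Injective f) {n m : ℕ}
    (h : lvl f n ⊆ lvl f m) : n ≤ m := by
  obtain ⟨k, hk, s, hs⟩ := h (show f (n, []) ∈ lvl f n from ⟨n, le_rfl, [], rfl⟩)
  have := hf hs
  simp only [Prod.mk.injEq] at this
  omega

theorem lvl_mono (f : ℕ × List Bool → ι) {n m : ℕ} (h : n ≤ m) : lvl f n ⊆ lvl f m := by
  rintro i ⟨k, hk, s, hs⟩
  exact ⟨k, hk.trans h, s, hs⟩

theorem lvl_inj (f : ℕ × List Bool → ι) (hf : Function.Injective f) :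
    Function.Injective (lvl f) := fun _ _ h =>
  le_antisymm (lvl_le f hf h.le) (lvl_le f hf h.ge)

def V (δ : Ordinal.{u}) (n : ℕ) : Set (List Ordinal.{u}) := {l | Valid δ l ∧ l.length = n}

theorem phi_restrict (c : ∀ i, C i) (r : ι → ℕ × List Bool) (g : List Ordinal.{u} → (ℕ → Bool))
    {n m : ℕ} (h : n ≤ m) (x : List Ordinal.{u} →₀ ℤ) (i : ι) (hi : (r i).1 ≤ n) :
    phi c r g m x i = phi c r g n (x.mapDomain (List.drop (m - n))) i := by
  induction x using Finsupp.induction_linear with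
  | zero => simp
  | add x y hx hy => simp [Finsupp.mapDomain_add, hx, hy]
  | single l z =>
    have : m - n + (n - (r i).1) = m - (r i).1 := by omega
    simp [phi, Finsupp.mapDomain_single, gen, List.drop_drop, this]

def res (I : Set ι) : (∀ i, C i) →+ ((i : I) → C (i : ι)) where
  toFun a i := a i
  map_zero' := rfl
  map_add' _ _ := rfl

noncomputable def sysGrp (c : ∀ i, C i) (r : ι → ℕ × List Bool)
    (g : List Ordinal.{u} → (ℕ → Bool)) (f : ℕ × List Bool → ι) (δ : Ordinal.{u}) (I : Set ι) :
    AddSubgroup ((i : I) → C (i : ι)) :=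
  (((Finsupp.supported ℤ ℤ (V δ (Function.invFun (lvl f) I))).toAddSubgroup.map
    (phi c r g (Function.invFun (lvl f) I)).toAddMonoidHom)).map (res I)

theorem mem_sysGrp (c : ∀ i, C i) (r : ι → ℕ × List Bool)
    (g : List Ordinal.{u} → (ℕ → Bool)) (f : ℕ × List Bool → ι) (hf : Function.Injective f)
    (δ : Ordinal.{u}) (n : ℕ) (a : (i : lvl f n) → C (i : ι)) :
    a ∈ sysGrp c r g f δ (lvl f n) ↔ ∃ x ∈ Finsupp.supported ℤ ℤ (V δ n),
      (fun i : lvl f n => phi c r g n x i) = a := by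
  have h := Function.leftInverse_invFun (lvl_inj f hf) n
  unfold sysGrp
  rw [h]
  simp only [AddSubgroup.mem_map, Submodule.mem_toAddSubgroup]
  constructor
  · rintro ⟨_, ⟨x, hx, rfl⟩, rfl⟩
    exact ⟨x, hx, rfl⟩
  · rintro ⟨x, hx, rfl⟩
    exact ⟨_, ⟨x, hx, rfl⟩, rfl⟩

theorem mapDomain_mem {δ : Ordinal.{u}} {n m : ℕ} (h : n ≤ m) (x : List Ordinal.{u} →₀ ℤ)
    (hx : x ∈ Finsupp.supported ℤ ℤ (V δ m)) :
    x.mapDomain (List.drop (m - n)) ∈ Finsupp.supported ℤ ℤ (V δ n) := by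
  classical
  rw [Finsupp.mem_supported] at hx ⊢
  intro l hl
  have hl' := Finsupp.mapDomain_support hl
  obtain ⟨l', hl'', rfl⟩ := Finset.mem_image.1 hl'
  obtain ⟨h1, h2⟩ := hx hl''
  exact ⟨h1.drop _, by simp [h2]; omega⟩

noncomputable def sys (c : ∀ i, C i) (r : ι → ℕ × List Bool)
    (g : List Ordinal.{u} → (ℕ → Bool)) (f : ℕ × List Bool → ι) (hf : Function.Injective f)
    (hr : Function.LeftInverse r f) (δ : Ordinal.{u}) : CSystem C where
  idx := Set.range (lvl f)
  directed := by
    rintro _ ⟨n, rfl⟩ _ ⟨m, rfl⟩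
    exact ⟨_, ⟨max n m, rfl⟩, lvl_mono f (le_max_left _ _), lvl_mono f (le_max_right _ _)⟩
  grp := sysGrp c r g f δ
  restrict_mem := by
    rintro _ ⟨n, rfl⟩ _ ⟨m, rfl⟩ h a ha
    rw [mem_sysGrp c r g f hf] at ha ⊢
    obtain ⟨x, hx, rfl⟩ := ha
    have hnm := lvl_le f hf h
    refine ⟨_, mapDomain_mem hnm x hx, ?_⟩
    funext ⟨i, hi⟩
    obtain ⟨k, hk, s, rfl⟩ := hi
    exact (phi_restrict c r g hnm x _ (by simpa [hr (k, s)] using hk)).symm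

/-- Independence of the generators modulo `N`. -/
theorem indep (c : ∀ i, C i) (r : ι → ℕ × List Bool)
    (g : List Ordinal.{u} → (ℕ → Bool)) (f : ℕ × List Bool → ι)
    (hr : Function.LeftInverse r f) (δ : Ordinal.{u})
    (hg : ∀ l l', Valid δ l → Valid δ l' → g l = g l' → l = l') (N : Ideal ℤ)
    (hN : ∀ z : ℤ, {p | z • c (f p) = 0}.Infinite → z ∈ N) (n : ℕ)
    (x : List Ordinal.{u} →₀ ℤ) (hx : x ∈ Finsupp.supported ℤ ℤ (V δ n))
    (h0 : ∀ i ∈ lvl f n, phi c r g n x i = 0) (l : List Ordinal.{u}) : x l ∈ N := by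
  classical
  by_cases hl : l ∈ x.support
  swap
  · rw [Finsupp.notMem_support_iff.1 hl]
    exact N.zero_mem
  rw [Finsupp.mem_supported] at hx
  apply hN
  have hev : ∀ᶠ t : ℕ in Filter.atTop, ∀ l' ∈ x.support, l' ≠ l →
      (List.range t).map (g l) ≠ (List.range t).map (g l') := by
    rw [Filter.eventually_all_finset]
    intro l' hl'
    by_cases hne : l' = l
    · simp [hne]
    · have hgne : g l ≠ g l' := fun h => hne (hg _ _ (hx hl).1 (hx hl').1 h).symm
      obtain ⟨k, hk⟩ := Function.ne_iff.1 hgne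
      filter_upwards [Filter.eventually_gt_atTop k] with t ht _ heq
      exact hk (List.map_inj_left.1 heq k (List.mem_range.2 ht))
  obtain ⟨T, hT⟩ := Filter.eventually_atTop.1 hev
  have hinj : Set.InjOn (fun t : ℕ => (n, (List.range t).map (g l))) (Set.Ici T) := by
    intro a _ b _ hab
    have := congrArg (fun p : ℕ × List Bool => p.2.length) hab
    simpa using this
  refine ((Set.Ici_infinite T).image hinj).mono ?_
  rintro _ ⟨t, ht, rfl⟩
  have hz := h0 (f (n, (List.range t).map (g l))) ⟨n, le_rfl, _, rfl⟩
  rw [phi, Finsupp.linearCombination_apply, Finsupp.sum, Finset.sum_apply,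
    Finset.sum_eq_single l] at hz
  · simpa [gen, hr _] using hz
  · intro l' hl' hne
    have := hT t ht l' hl' hne
    have h2 : gen c r g n l' (f (n, (List.range t).map (g l))) = 0 := by
      unfold gen
      rw [if_neg]
      simpa [hr _] using this
    simp [h2]
  · intro h
    exact absurd hl h

theorem rank_lower (c : ∀ i, C i) (r : ι → ℕ × List Bool)
    (g : List Ordinal.{u} → (ℕ → Bool)) (f : ℕ × List Bool → ι) (hf : Function.Injective f)
    (hr : Function.LeftInverse r f) (δ : Ordinal.{u}) (γ : Ordinal.{u}) :
    ∀ (n : ℕ) (l : List Ordinal.{u}), l ∈ V δ n → ω * γ ≤ l.headD δ →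
      rankGE (sys c r g f hf hr δ) γ (lvl f n)
        (fun i => phi c r g n (Finsupp.single l 1) i) := by
  induction γ using WellFoundedLT.induction with
  | ind γ ih =>
    intro n l hl hγ
    rw [rankGE]
    rintro β hβ _ ⟨m, rfl⟩ h
    have hnm := lvl_le f hf h
    have hle : ω * β + ((m - n : ℕ) : Ordinal.{u}) ≤ l.headD δ := by
      refine le_trans ?_ hγ
      refine le_trans ?_ (mul_le_mul_right (Order.succ_le_of_lt hβ) ω)
      rw [Ordinal.mul_succ]
      exact add_le_add_right (Ordinal.natCast_lt_omega0 _).le _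
    obtain ⟨l', h1, h2, h3, h4⟩ := Valid.ext (ω * β) (m - n) l hl.1 hle
    have hl' : l' ∈ V δ m := ⟨h1, by rw [h2, hl.2]; omega⟩
    refine ⟨_, (mem_sysGrp c r g f hf δ m _).2 ⟨Finsupp.single l' 1, ?_, rfl⟩, ?_,
      ih β hβ m l' hl' h4⟩
    · exact Finsupp.single_mem_supported ℤ 1 hl'
    · funext ⟨i, hi⟩
      obtain ⟨k, hk, s, rfl⟩ := hi
      have := phi_restrict c r g hnm (Finsupp.single l' 1) (f (k, s)) (by simpa [hr (k, s)] using hk)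
      rw [Finsupp.mapDomain_single, h3] at this
      exact this

theorem rank_upper (c : ∀ i, C i) (r : ι → ℕ × List Bool)
    (g : List Ordinal.{u} → (ℕ → Bool)) (f : ℕ × List Bool → ι) (hf : Function.Injective f)
    (hr : Function.LeftInverse r f) (δ : Ordinal.{u})
    (hg : ∀ l l', Valid δ l → Valid δ l' → g l = g l' → l = l') (N : Ideal ℤ)
    (hN : ∀ z : ℤ, {p | z • c (f p) = 0}.Infinite → z ∈ N) (γ : Ordinal.{u}) :
    ∀ (n : ℕ) (l : List Ordinal.{u}) (x : List Ordinal.{u} →₀ ℤ),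
      x ∈ Finsupp.supported ℤ ℤ (V δ n) → x l ∉ N → l.headD δ = γ →
      ¬ rankGE (sys c r g f hf hr δ) (Order.succ γ) (lvl f n) (fun i => phi c r g n x i) := by
  classical
  induction γ using WellFoundedLT.induction with
  | ind γ ih =>
    intro n l x hx hxl hγ hrank
    rw [rankGE] at hrank
    obtain ⟨b, hb, hbr, hbrank⟩ := hrank γ (Order.lt_succ γ) (lvl f (n + 1)) ⟨n + 1, rfl⟩
      (lvl_mono f (Nat.le_succ n))
    obtain ⟨y, hy, rfl⟩ := (mem_sysGrp c r g f hf δ (n + 1) b).1 hb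
    have hy' := mapDomain_mem (Nat.le_succ n) y hy
    have hd := indep c r g f hr δ hg N hN n _ (Submodule.sub_mem _ hx hy') (by
      intro i hi
      have e1 := congrFun hbr ⟨i, hi⟩
      obtain ⟨k, hk, s, rfl⟩ := hi
      have e2 := phi_restrict c r g (Nat.le_succ n) y (f (k, s)) (by simpa [hr (k, s)] using hk)
      simp only at e1
      rw [map_sub, Pi.sub_apply, ← e2, ← e1]
      exact sub_self _) l
    have hyl : (y.mapDomain (List.drop (n + 1 - n))) l ∉ N := by
      intro hmem
      apply hxl
      have := N.add_mem hd hmem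
      simpa using this
    have : ∃ l' ∈ y.support, l'.drop 1 = l ∧ y l' ∉ N := by
      by_contra hcon
      push Not at hcon
      apply hyl
      rw [Finsupp.mapDomain, Finsupp.sum_apply, Finsupp.sum]
      refine N.sum_mem ?_
      intro l' hl'
      rw [Finsupp.single_apply]
      split_ifs with h
      · exact hcon l' hl' (by simpa using h)
      · exact N.zero_mem
    obtain ⟨l', hl', hdrop, hl'N⟩ := this
    have hv := (Finsupp.mem_supported _ _).1 hy hl'
    match l', hv, hdrop, hl'N with
    | [], hv, _, _ => simp [V] at hv
    | z :: l'', hv, hdrop, hl'N =>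
      have : l'' = l := by simpa using hdrop
      subst this
      have hz : z < γ := hγ ▸ hv.1.1
      exact ih z hz (n + 1) (z :: l'') y hy hl'N rfl
        (rankGE_anti _ (Order.succ_le_of_lt hz) _ _ hbrank)

end construction

end CSys

open CSys

/-- For a countably infinite index set, nonzero abelian groups `Cᵢ`, and any ordinal
`α* < (2^ℵ₀)⁺`, there is a `C̄`-system of rank `> α*`. -/
theorem exists_system_of_large_rank {ι : Type u} [Countable ι] [Infinite ι]
    (C : ι → Type u) [∀ i, AddCommGroup (C i)] [∀ i, Nontrivial (C i)]
    (α : Ordinal.{u}) (hα : α < (Order.succ (2 ^ Cardinal.aleph0 : Cardinal.{u})).ord) :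
    ∃ S : CSystem C, α < sysRank S := by
  choose c hc using fun i => exists_ne (0 : C i)
  obtain ⟨f, N, hf, h1, hN⟩ := exists_emb C c hc
  have hr : Function.LeftInverse (Function.invFun f) f := Function.leftInverse_invFun hf
  have hcard : (Ordinal.omega0 * α).card ≤ 2 ^ Cardinal.aleph0 := by
    have h2 : α.card ≤ 2 ^ Cardinal.aleph0 := Order.lt_succ_iff.1 (Cardinal.lt_ord.1 hα)
    have h3 : Cardinal.aleph0 ≤ (2 : Cardinal.{u}) ^ Cardinal.aleph0 := (Cardinal.cantor _).le
    rw [Ordinal.card_mul, Ordinal.card_omega0]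
    exact (mul_le_mul' h3 h2).trans (Cardinal.mul_eq_self h3).le
  obtain ⟨g, hg⟩ := exists_code _ hcard
  have hnil : ([] : List Ordinal.{u}) ∈ V (Ordinal.omega0 * α) 0 := ⟨trivial, rfl⟩
  refine ⟨sys c (Function.invFun f) g f hf hr (Ordinal.omega0 * α), ?_⟩
  refine lt_sysRank _ (lvl f 0) ⟨0, rfl⟩ _ ?_
    (rank_lower c _ g f hf hr _ α 0 [] hnil le_rfl)
    (rank_upper c _ g f hf hr _ hg N hN _ 0 [] (Finsupp.single [] 1)
      (Finsupp.single_mem_supported ℤ 1 hnil) (by simpa using h1) rfl)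
  exact (mem_sysGrp c _ g f hf _ 0 _).2 ⟨_, Finsupp.single_mem_supported ℤ 1 hnil, rfl⟩
end

section
/- Let M̄ = (M_n : n < ω) ∈ 𝕄 and suppose that for all but finitely many n the action of Aut(M_n) on M_n is free. Then every elementary substructure M of ∏_n M_n admits a finite base. -/
open FirstOrder

universe u v w

namespace ProdStr

open FirstOrder

/-- A purely relational language, with relation symbols `Rs k` of arity `k`. -/
def relLang (Rs : ℕ → Type) : FirstOrder.Language :=
  ⟨fun _ => Empty, Rs⟩

/-- The combined language of the product `∏ₙ Mₙ`: the (disjoint) union of all the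
relational languages `ℒₙ` (with relations `Rs n k` of arity `k`), together with new
binary relation symbols `Eₙ` for `n < ω`. -/
def prodLang (Rs : ℕ → ℕ → Type) : FirstOrder.Language :=
  ⟨fun _ => Empty, fun k => (Σ n : ℕ, Rs n k) ⊕ (PLift (k = 2) × ℕ)⟩

/-- The product structure `∏ₙ Mₙ`: `E_m(a,b)` iff `a m = b m`, and `R(ā)` iff
`Mₘ ⊨ R(ā(m))` for `R` a relation of `ℒₘ`. -/
instance prodStructure (Rs : ℕ → ℕ → Type) (Mf : ℕ → Type)
    [∀ n, (relLang (Rs n)).Structure (Mf n)] :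
    (prodLang Rs).Structure (∀ n, Mf n) where
  funMap := fun f _ => f.elim
  RelMap := fun {k} r x =>
    match r with
    | Sum.inl ⟨n, R⟩ =>
        Language.Structure.RelMap (L := relLang (Rs n)) (M := Mf n)
          (R : (relLang (Rs n)).Relations k) (fun i => x i n)
    | Sum.inr ⟨h, m⟩ => x (Fin.cast h.down.symm 0) m = x (Fin.cast h.down.symm 1) m

/-- The action of `Aut(Mₙ)` on `Mₙ` is free: any automorphism with a fixed point is the
identity. -/
def FreeAut (Rs : ℕ → ℕ → Type) (Mf : ℕ → Type)
    [∀ n, (relLang (Rs n)).Structure (Mf n)] (n : ℕ) : Prop :=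
  ∀ σ : Mf n ≃[relLang (Rs n)] Mf n, ∀ x : Mf n, σ x = x → ∀ y : Mf n, σ y = y

end ProdStr

open ScottTools ProdStr FirstOrder

theorem realize_iff_elem {L : FirstOrder.Language} {M : Type} [L.Structure M]
    (S : L.ElementarySubstructure M) {α : Type} (φ : L.Formula α) (v : α → S) :
    φ.Realize v ↔ φ.Realize (fun i => (v i : M)) :=
  (S.subtype.map_formula φ v).symm

/-- the formula `E_n(x,y)` -/
def eqF (Rs : ℕ → ℕ → Type) {α : Type} (n : ℕ) (x y : α) : (prodLang Rs).Formula α :=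
  Language.Relations.formula (L := prodLang Rs) (n := 2)
    (Sum.inr ⟨⟨rfl⟩, n⟩ : (Σ n : ℕ, Rs n 2) ⊕ (PLift (2 = 2) × ℕ))
    (fun i => Language.Term.var (if i = 0 then x else y))

theorem realize_eqF (Rs : ℕ → ℕ → Type) (Mf : ℕ → Type)
    [∀ n, (relLang (Rs n)).Structure (Mf n)] {α : Type} (n : ℕ) (x y : α)
    (v : α → ∀ n, Mf n) : (eqF Rs n x y).Realize v ↔ v x n = v y n := by
  exact Language.Formula.realize_rel (L := prodLang Rs)

/-- the formula `R(t)` -/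
def relF (Rs : ℕ → ℕ → Type) {α : Type} (n k : ℕ) (R : Rs n k) (t : Fin k → α) :
    (prodLang Rs).Formula α :=
  Language.Relations.formula (L := prodLang Rs) (n := k)
    (Sum.inl ⟨n, R⟩ : (Σ n : ℕ, Rs n k) ⊕ (PLift (k = 2) × ℕ))
    (fun i => Language.Term.var (t i))

theorem realize_relF (Rs : ℕ → ℕ → Type) (Mf : ℕ → Type)
    [∀ n, (relLang (Rs n)).Structure (Mf n)] {α : Type} (n k : ℕ) (R : Rs n k) (t : Fin k → α)
    (v : α → ∀ n, Mf n) : (relF Rs n k R t).Realize v ↔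
      Language.Structure.RelMap (L := relLang (Rs n)) (M := Mf n)
          (R : (relLang (Rs n)).Relations k) (fun i => v (t i) n) := by
  exact Language.Formula.realize_rel (L := prodLang Rs)

theorem exists_chi (Rs : ℕ → ℕ → Type) (Mf : ℕ → Type)
    [∀ n, (relLang (Rs n)).Structure (Mf n)] [∀ n, Fintype (Mf n)] (n : ℕ)
    (hf : FreeAut Rs Mf n) (σ : Mf n → Mf n) :
    ∃ χ : (prodLang Rs).Formula (Mf n),
      (∀ y : Mf n → ∀ n, Mf n, (∀ m, y m n = m) → χ.Realize y) ∧
      ((∃ y : Mf n → ∀ n, Mf n, (∀ m, y m n = σ m) ∧ χ.Realize y) →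
        ∀ c, σ c = c → ∀ a, σ a = a) := by
  by_cases hinj : Function.Injective σ
  · by_cases hrel : ∀ (k : ℕ) (R : Rs n k) (t : Fin k → Mf n),
      Language.Structure.RelMap (L := relLang (Rs n)) (M := Mf n)
          (R : (relLang (Rs n)).Relations k) (fun i => σ (t i)) ↔
      Language.Structure.RelMap (L := relLang (Rs n)) (M := Mf n)
          (R : (relLang (Rs n)).Relations k) t
    · refine ⟨⊤, fun _ _ => by simp [Language.Formula.Realize], fun _ c hc a => ?_⟩
      let τ : Mf n ≃[relLang (Rs n)] Mf n :=
        { toEquiv := Equiv.ofBijective σ (Finite.injective_iff_bijective.1 hinj)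
          map_fun' := fun f _ => Empty.elim f
          map_rel' := fun {k} R t => hrel k R t }
      exact hf τ c hc a
    · push Not at hrel
      obtain ⟨k, R, t, h⟩ := hrel
      by_cases hR : Language.Structure.RelMap (L := relLang (Rs n)) (M := Mf n)
          (R : (relLang (Rs n)).Relations k) t
      · refine ⟨relF Rs n k R t, fun y hy => ?_, fun ⟨y, hy, hy'⟩ => ?_⟩
        · rw [realize_relF]; simpa only [hy] using hR
        · rw [realize_relF] at hy'; simp only [hy] at hy'; tauto
      · refine ⟨(relF Rs n k R t).not, fun y hy => ?_, fun ⟨y, hy, hy'⟩ => ?_⟩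
        · rw [Language.Formula.realize_not, realize_relF]; simpa only [hy] using hR
        · rw [Language.Formula.realize_not, realize_relF] at hy'; simp only [hy] at hy'; tauto
  · simp only [Function.Injective, not_forall] at hinj
    obtain ⟨a, b, hab, hne⟩ := hinj
    refine ⟨(eqF Rs n a b).not, fun y hy => ?_, fun ⟨y, hy, hy'⟩ => ?_⟩
    · rw [Language.Formula.realize_not, realize_eqF, hy, hy]; exact hne
    · rw [Language.Formula.realize_not, realize_eqF, hy, hy] at hy'; exact absurd hab hy'

theorem exists_formula (Rs : ℕ → ℕ → Type) (Mf : ℕ → Type)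
    [∀ n, (relLang (Rs n)).Structure (Mf n)] [∀ n, Fintype (Mf n)]
    (hne : ∀ n, Nonempty (Mf n)) (n : ℕ)
    (hf : FreeAut Rs Mf n) (c a : Mf n) :
    ∃ φ : (prodLang Rs).Formula (Fin 2), ∀ v : Fin 2 → ∀ n, Mf n, v 0 n = c →
      (φ.Realize v ↔ v 1 n = a) := by
  classical
  choose χ h1 h2 using exists_chi Rs Mf n hf
  let ψ : (prodLang Rs).Formula (Fin 2 ⊕ Mf n) :=
    (eqF Rs n (Sum.inl 0) (Sum.inr c)) ⊓ ((eqF Rs n (Sum.inl 1) (Sum.inr a)) ⊓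
      Language.Formula.iInf (fun σ => (χ σ).relabel Sum.inr))
  refine ⟨Language.Formula.iExs (Mf n) ψ, fun v hv => ?_⟩
  rw [Language.Formula.realize_iExs]
  simp only [ψ, Language.Formula.realize_inf, realize_eqF, Language.Formula.realize_iInf,
    Language.Formula.realize_relabel, Sum.elim_inl, Sum.elim_inr, Sum.elim_comp_inr]
  constructor
  · rintro ⟨y, hc, ha, hy⟩
    rw [ha]
    refine h2 (fun m => y m n) ⟨y, fun _ => rfl, hy _⟩ c ?_ a
    rw [← hc, hv]
  · intro ha
    refine ⟨fun m => Function.update (fun k => (hne k).some) n m, ?_, ?_, fun σ => h1 σ _ ?_⟩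
    · simpa using hv
    · simpa using ha
    · simp

/-- If `M̄ ∈ 𝕄` and the action of `Aut(Mₙ)` on `Mₙ` is free for all but finitely many
`n`, then every elementary substructure of `∏ₙ Mₙ` admits a finite base. -/
theorem finite_base_of_ae_free (Rs : ℕ → ℕ → Type) (Mf : ℕ → Type)
    [∀ n, (relLang (Rs n)).Structure (Mf n)] [∀ n, Fintype (Mf n)]
    (hcard : ∀ n, 2 ≤ Fintype.card (Mf n))
    (hfree : {n : ℕ | ¬ FreeAut Rs Mf n}.Finite)
    (S : (prodLang Rs).ElementarySubstructure (∀ n, Mf n)) :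
    ∃ B : Set S, B.Finite ∧ IsBase (prodLang Rs) S B := by
  classical
  have hne : ∀ n, Nonempty (Mf n) := fun n =>
    Fintype.card_pos_iff.1 (lt_of_lt_of_le (by norm_num) (hcard n))
  by_cases hS : Nonempty S
  swap
  · exact ⟨∅, Set.finite_empty, fun a => (hS ⟨a⟩).elim⟩
  obtain ⟨c⟩ := hS
  let r : (Σ n : ℕ, Mf n) → S := fun p =>
    if h : ∃ s : S, (s : ∀ n, Mf n) p.1 = p.2 then h.choose else c
  have hr : ∀ (n : ℕ) (s : S), (r ⟨n, (s : ∀ n, Mf n) n⟩ : ∀ n, Mf n) n = (s : ∀ n, Mf n) n := by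
    intro n s
    have h : ∃ s' : S, (s' : ∀ n, Mf n) n = (s : ∀ n, Mf n) n := ⟨s, rfl⟩
    simp only [r, dif_pos h]
    exact h.choose_spec
  refine ⟨insert c (⋃ n ∈ {n : ℕ | ¬ FreeAut Rs Mf n}, Set.range fun m : Mf n => r ⟨n, m⟩),
    (hfree.biUnion fun n _ => Set.finite_range _).insert c, fun a b hab => ?_⟩
  have key : ∀ p ∈ insert c (⋃ n ∈ {n : ℕ | ¬ FreeAut Rs Mf n},
      Set.range fun m : Mf n => r ⟨n, m⟩), ∀ φ : (prodLang Rs).Formula (Fin 2),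
      (φ.Realize (![(p : ∀ n, Mf n), a] : Fin 2 → ∀ n, Mf n) ↔
        φ.Realize (![(p : ∀ n, Mf n), b] : Fin 2 → ∀ n, Mf n)) := by
    intro p hp φ
    have h := hab 1 (fun _ => p) (fun _ => hp) φ
    rw [realize_iff_elem, realize_iff_elem] at h
    convert h using 2 <;> (ext i; fin_cases i <;> rfl)
  apply Subtype.ext
  funext n
  by_cases hn : FreeAut Rs Mf n
  · obtain ⟨φ, hφ⟩ := exists_formula Rs Mf hne n hn ((c : ∀ n, Mf n) n) ((a : ∀ n, Mf n) n)
    have h := key c (Set.mem_insert _ _) φ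
    rw [hφ _ rfl, hφ _ rfl] at h
    exact (h.1 rfl).symm
  · have h := key (r ⟨n, (a : ∀ n, Mf n) n⟩)
      (Set.mem_insert_of_mem _ (Set.mem_biUnion (x := n) hn ⟨_, rfl⟩)) (eqF Rs n 0 1)
    rw [realize_eqF, realize_eqF] at h
    have h2 := h.1 (hr n a)
    exact (hr n a).symm.trans h2
end
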